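/- Let f : ℝ² → ℝ be a bounded continuous function. Then there exists a function u ∈ 𝒞_M minimizing F(u) = ∫_Ω f(∇u(x)) dx in 𝒞_M which possesses the following property: whenever 𝒰 ⊆ int Ω is an open set on which u is C¹ and u > 0, the set graph(u|_𝒰) = {(x, u(x)) : x ∈ 𝒰} contains no extreme points of the epigraph epi(u). -/

import Mathlib

open Set MeasureTheory Pointwise

/-- The gradient of `u : ℝ² → ℝ` at `x`, represented as the pair of partial
derivatives (junk value `(0,0)` where `u` is not differentiable). -/
noncomputable def grad2 (u : ℝ × ℝ → ℝ) (x : ℝ × ℝ) : ℝ × ℝ :=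
  (fderiv ℝ u x (1, 0), fderiv ℝ u x (0, 1))

/-- Second derivative of `f : ℝ² → ℝ` at `ξ` in directions `v`, `w`. -/
noncomputable def hess2 (f : ℝ × ℝ → ℝ) (ξ v w : ℝ × ℝ) : ℝ :=
  fderiv ℝ (fun y => fderiv ℝ f y v) ξ w

/-- Determinant of the Hessian matrix of `f : ℝ² → ℝ` at `ξ`. -/
noncomputable def hessDet (f : ℝ × ℝ → ℝ) (ξ : ℝ × ℝ) : ℝ :=
  hess2 f ξ (1, 0) (1, 0) * hess2 f ξ (0, 1) (0, 1)
    - hess2 f ξ (1, 0) (0, 1) * hess2 f ξ (0, 1) (1, 0)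

/-- The Hessian matrix of `f` at `ξ` has a negative eigenvalue. -/
def HasNegEigenvalue (f : ℝ × ℝ → ℝ) (ξ : ℝ × ℝ) : Prop :=
  ∃ μ : ℝ, μ < 0 ∧ ∃ v : ℝ × ℝ, v ≠ 0 ∧
    (hess2 f ξ (1, 0) (1, 0) * v.1 + hess2 f ξ (1, 0) (0, 1) * v.2,
     hess2 f ξ (0, 1) (1, 0) * v.1 + hess2 f ξ (0, 1) (0, 1) * v.2) = μ • v

/-- The functional `F(u) = ∫_Ω f(∇u(x)) dx`. -/
noncomputable def NF (f : ℝ × ℝ → ℝ) (Ω : Set (ℝ × ℝ)) (u : ℝ × ℝ → ℝ) : ℝ :=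
  ∫ x in Ω, f (grad2 u x)

/-- Membership in the class `𝒞_M` of convex functions on `Ω` with `0 ≤ u ≤ M`. -/
def MemCM (Ω : Set (ℝ × ℝ)) (M : ℝ) (u : ℝ × ℝ → ℝ) : Prop :=
  ConvexOn ℝ Ω u ∧ ∀ x ∈ Ω, 0 ≤ u x ∧ u x ≤ M

/-- `u` minimizes `F` in the class `𝒞_M`. -/
def Minimizes (f : ℝ × ℝ → ℝ) (Ω : Set (ℝ × ℝ)) (M : ℝ) (u : ℝ × ℝ → ℝ) : Prop :=
  MemCM Ω M u ∧ ∀ v : ℝ × ℝ → ℝ, MemCM Ω M v → NF f Ω u ≤ NF f Ω v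

/-- Epigraph of `u` over `Ω`, as a subset of `ℝ³ = (ℝ × ℝ) × ℝ`. -/
def epi (Ω : Set (ℝ × ℝ)) (u : ℝ × ℝ → ℝ) : Set ((ℝ × ℝ) × ℝ) :=
  {p | p.1 ∈ Ω ∧ u p.1 ≤ p.2}

/-- Euclidean scalar product on `ℝ³ = (ℝ × ℝ) × ℝ`. -/
def dot3 (n r : (ℝ × ℝ) × ℝ) : ℝ := n.1.1 * r.1.1 + n.1.2 * r.1.2 + n.2 * r.2

/-- `n` is an outward unit normal to the convex set `C` at `r`. -/
def IsOutwardNormal (C : Set ((ℝ × ℝ) × ℝ)) (r n : (ℝ × ℝ) × ℝ) : Prop :=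
  dot3 n n = 1 ∧ ∀ y ∈ C, dot3 n (y - r) ≤ 0

/-- `r` is a singular boundary point of `C`: a frontier point with at least two
distinct outward unit normals. -/
def IsSingularPt (C : Set ((ℝ × ℝ) × ℝ)) (r : (ℝ × ℝ) × ℝ) : Prop :=
  r ∈ frontier C ∧ ∃ n₁ n₂ : (ℝ × ℝ) × ℝ, n₁ ≠ n₂ ∧
    IsOutwardNormal C r n₁ ∧ IsOutwardNormal C r n₂

/-- Epigraph of a one-variable function over `[a, b]`. -/
def epi1 (a b : ℝ) (u : ℝ → ℝ) : Set (ℝ × ℝ) :=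
  {p | p.1 ∈ Set.Icc a b ∧ u p.1 ≤ p.2}

/-- The one-dimensional functional `F(v) = ∫_a^b f(v'(x)) dx`. -/
noncomputable def NF1 (f : ℝ → ℝ) (a b : ℝ) (v : ℝ → ℝ) : ℝ :=
  ∫ x in a..b, f (deriv v x)

/-- The face of a convex set `K ⊂ ℝ³` in direction `n`. -/
def face3 (K : Set ((ℝ × ℝ) × ℝ)) (n : (ℝ × ℝ) × ℝ) : Set ((ℝ × ℝ) × ℝ) :=
  {r | r ∈ K ∧ ∀ ρ ∈ K, dot3 n ρ ≤ dot3 n r}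

lemma cvx_ae_diff {Ω : Set (ℝ × ℝ)} {u : ℝ × ℝ → ℝ} (hu : ConvexOn ℝ Ω u) :
    ∀ᵐ x, x ∈ interior Ω → DifferentiableAt ℝ u x := by
  have hL := hu.locallyLipschitzOn_interior
  have key : ∀ x ∈ interior Ω, ∃ t ∈ nhdsWithin x (interior Ω),
      volume (t ∩ {y | ¬ DifferentiableAt ℝ u y}) = 0 := by
    intro x hx
    obtain ⟨K, t, ht, hK⟩ := hL hx
    rw [isOpen_interior.nhdsWithin_eq hx] at ht ⊢
    refine ⟨interior t, interior_mem_nhds.2 ht, ?_⟩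
    have h1 := (hK.mono interior_subset).ae_differentiableWithinAt_of_mem (μ := volume)
    have h2 : ∀ᵐ y, ¬ (y ∈ interior t ∩ {y | ¬ DifferentiableAt ℝ u y}) := by
      filter_upwards [h1] with y hy hy2
      exact hy2.2 ((hy hy2.1).differentiableAt (isOpen_interior.mem_nhds hy2.1))
    exact measure_eq_zero_iff_ae_notMem.2 h2
  choose! t ht hv using key
  have : volume (interior Ω ∩ {y | ¬ DifferentiableAt ℝ u y}) = 0 := by
    apply measure_null_of_locally_null
    intro x hx
    refine ⟨t x ∩ {y | ¬ DifferentiableAt ℝ u y}, ?_, hv x hx.1⟩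
    exact Filter.inter_mem (nhdsWithin_mono _ inter_subset_left (ht x hx.1))
      (Filter.mem_of_superset self_mem_nhdsWithin inter_subset_right)
  rw [ae_iff]
  convert this using 2
  ext x; simp

lemma touch_fderiv {u v : ℝ × ℝ → ℝ} {x : ℝ × ℝ} (hu : DifferentiableAt ℝ u x)
    (hv : DifferentiableAt ℝ v x) (h : ∀ᶠ y in nhds x, u y ≤ v y) (he : u x = v x) :
    fderiv ℝ u x = fderiv ℝ v x := by
  have hm : IsLocalMin (fun y => v y - u y) x := by
    filter_upwards [h] with y hy
    simp only [he]; linarith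
  have := hm.fderiv_eq_zero
  rw [fderiv_fun_sub hv hu] at this
  exact (sub_eq_zero.1 this).symm

lemma touch_grad {u v : ℝ × ℝ → ℝ} {x : ℝ × ℝ} (hu : DifferentiableAt ℝ u x)
    (hv : DifferentiableAt ℝ v x) (h : ∀ᶠ y in nhds x, u y ≤ v y) (he : u x = v x) :
    grad2 u x = grad2 v x := by
  simp only [grad2, touch_fderiv hu hv h he]

lemma grad2_meas (u : ℝ × ℝ → ℝ) : Measurable (grad2 u) :=
  (measurable_fderiv_apply_const ℝ u (1, 0)).prodMk (measurable_fderiv_apply_const ℝ u (0, 1))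

lemma fgrad_meas {f : ℝ × ℝ → ℝ} (hf : Continuous f) (u : ℝ × ℝ → ℝ) :
    Measurable (fun x => f (grad2 u x)) := hf.measurable.comp (grad2_meas u)

lemma fgrad_int {f : ℝ × ℝ → ℝ} (hf : Continuous f) {K : ℝ} (hK : ∀ ξ, |f ξ| ≤ K)
    (u : ℝ × ℝ → ℝ) {s : Set (ℝ × ℝ)} (hs : volume s < ⊤) :
    IntegrableOn (fun x => f (grad2 u x)) s := by
  refine IntegrableOn.of_bound hs (fgrad_meas hf u).aestronglyMeasurable K ?_
  exact Filter.Eventually.of_forall fun x => by simpa using hK _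

/-- a.e. point of a convex set is interior -/
lemma ae_interior {Ω : Set (ℝ × ℝ)} (hΩ : Convex ℝ Ω) : ∀ᵐ x, x ∈ Ω → x ∈ interior Ω := by
  have := hΩ.addHaar_frontier volume
  rw [ae_iff]
  refine measure_mono_null ?_ this
  intro x hx
  simp only [mem_ofPred_eq, Classical.not_imp] at hx
  exact ⟨subset_closure hx.1, hx.2⟩

lemma tangent_le {Ω : Set (ℝ × ℝ)} {u : ℝ × ℝ → ℝ} (hu : ConvexOn ℝ Ω u) {x y : ℝ × ℝ}
    (hx : x ∈ Ω) (hy : y ∈ Ω) (hd : DifferentiableAt ℝ u x) :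
    u x + fderiv ℝ u x (y - x) ≤ u y := by
  have h1 : HasDerivAt (fun t : ℝ => u (x + t • (y - x))) (fderiv ℝ u x (y - x)) 0 := by
    have := (hd.hasFDerivAt).hasLineDerivAt (y - x)
    exact this
  have h2 : ConvexOn ℝ (Icc (0:ℝ) 1) (fun t : ℝ => u (x + t • (y - x))) := by
    refine ⟨convex_Icc _ _, ?_⟩
    intro s hs t ht a b ha hb hab
    have mem : ∀ r ∈ Icc (0:ℝ) 1, x + r • (y - x) ∈ Ω := fun r hr =>
      hu.1.add_smul_sub_mem hx hy hr
    have := hu.2 (mem s hs) (mem t ht) ha hb hab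
    convert this using 2
    have hb' : b = 1 - a := by linarith
    subst hb'
    simp only [smul_eq_mul]
    module
  have h3 := h2.le_slope_of_hasDerivAt (x := 0) (y := 1) (by simp) (by simp) (by norm_num) h1
  simp [slope_def_field] at h3
  rw [map_sub]; linarith

lemma memCM_lip {Ω : Set (ℝ × ℝ)} {M : ℝ} {u : ℝ × ℝ → ℝ} (hu : MemCM Ω M u)
    {x y : ℝ × ℝ} {r : ℝ} (hr : 0 < r) (hb : Metric.ball x r ⊆ Ω) (hy : dist y x < r / 2) :
    |u y - u x| ≤ (4 * M / r) * dist y x := by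
  have hM : 0 ≤ M := by
    have := hu.2 x (hb (Metric.mem_ball_self hr)); linarith
  have h1 := (hu.1.subset hb (convex_ball _ _)).lipschitzOnWith_of_abs_le (ε := r / 2) (M := M)
    (by linarith) (by
      intro a ha
      have := hu.2 a (hb ha)
      rw [abs_of_nonneg this.1]; exact this.2)
  have h2 := h1.dist_le_mul y (by simp; linarith) x (by simp; linarith)
  rw [Real.coe_toNNReal _ (by positivity), Real.dist_eq] at h2
  convert h2 using 2
  field_simp; ring

lemma grad_upper {Ω : Set (ℝ × ℝ)} {u : ℕ → ℝ × ℝ → ℝ} {v : ℝ × ℝ → ℝ} {x : ℝ × ℝ}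
    (hx : x ∈ interior Ω) (hu : ∀ n, ConvexOn ℝ Ω (u n))
    (hud : ∀ n, DifferentiableAt ℝ (u n) x) (hvd : DifferentiableAt ℝ v x)
    (hlim : ∀ y ∈ interior Ω, Filter.Tendsto (fun n => u n y) Filter.atTop (nhds (v y)))
    (e : ℝ × ℝ) {ε : ℝ} (hε : 0 < ε) :
    ∀ᶠ n in Filter.atTop, fderiv ℝ (u n) x e < fderiv ℝ v x e + ε := by
  have h1 : HasDerivAt (fun t : ℝ => v (x + t • e)) (fderiv ℝ v x e) 0 :=
    (hvd.hasFDerivAt).hasLineDerivAt e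
  have h2 := h1.tendsto_slope_zero_right
  simp only [zero_add, zero_smul, add_zero] at h2
  have h3 : ∀ᶠ t in nhdsWithin (0:ℝ) (Ioi 0), t⁻¹ • (v (x + t • e) - v x) < fderiv ℝ v x e + ε :=
    h2.eventually_lt_const (by linarith)
  have h4 : ∀ᶠ t in nhdsWithin (0:ℝ) (Ioi 0), x + t • e ∈ interior Ω := by
    have hc : ContinuousAt (fun t : ℝ => x + t • e) 0 := by fun_prop
    apply hc.continuousWithinAt.eventually_mem
    simpa using isOpen_interior.mem_nhds hx
  obtain ⟨t, ⟨ht1, ht2⟩, ht3⟩ := ((h3.and h4).and self_mem_nhdsWithin).exists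
  have ht : 0 < t := ht3
  have h5 : Filter.Tendsto (fun n => t⁻¹ • (u n (x + t • e) - u n x)) Filter.atTop
      (nhds (t⁻¹ • (v (x + t • e) - v x))) :=
    ((hlim _ ht2).sub (hlim _ hx)).const_smul _
  filter_upwards [h5.eventually_lt_const ht1] with n hn
  refine lt_of_le_of_lt ?_ hn
  have := tangent_le (hu n) (interior_subset hx) (interior_subset ht2) (hud n)
  simp only [add_sub_cancel_left, map_smul, smul_eq_mul] at this
  rw [smul_eq_mul, inv_mul_eq_div, le_div_iff₀ ht]
  linarith

lemma grad_tendsto {Ω : Set (ℝ × ℝ)} {u : ℕ → ℝ × ℝ → ℝ} {v : ℝ × ℝ → ℝ} {x : ℝ × ℝ}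
    (hx : x ∈ interior Ω) (hu : ∀ n, ConvexOn ℝ Ω (u n))
    (hud : ∀ n, DifferentiableAt ℝ (u n) x) (hvd : DifferentiableAt ℝ v x)
    (hlim : ∀ y ∈ interior Ω, Filter.Tendsto (fun n => u n y) Filter.atTop (nhds (v y))) :
    Filter.Tendsto (fun n => grad2 (u n) x) Filter.atTop (nhds (grad2 v x)) := by
  have key : ∀ e, Filter.Tendsto (fun n => fderiv ℝ (u n) x e) Filter.atTop
      (nhds (fderiv ℝ v x e)) := by
    intro e
    rw [Metric.tendsto_nhds]
    intro ε hε
    filter_upwards [grad_upper hx hu hud hvd hlim e hε, grad_upper hx hu hud hvd hlim (-e) hε]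
      with n h1 h2
    simp only [map_neg] at h2
    rw [Real.dist_eq, abs_lt]; constructor <;> linarith
  exact (key _).prodMk_nhds (key _)

lemma cm_compact {Ω : Set (ℝ × ℝ)} (hΩc : IsCompact Ω) (hΩconv : Convex ℝ Ω) {M : ℝ} (hM : 0 < M)
    {f : ℝ × ℝ → ℝ} (hf : Continuous f) {K : ℝ} (hK : ∀ ξ, |f ξ| ≤ K)
    (u : ℕ → ℝ × ℝ → ℝ) (hu : ∀ n, MemCM Ω M (u n)) :
    ∃ φ : ℕ → ℕ, StrictMono φ ∧ ∃ v, MemCM Ω M v ∧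
      Filter.Tendsto (fun n => NF f Ω (u (φ n))) Filter.atTop (nhds (NF f Ω v)) ∧
      Filter.Tendsto (fun n => ∫ x in Ω, u (φ n) x) Filter.atTop (nhds (∫ x in Ω, v x)) := by
  classical
  let d : ℕ → ℝ × ℝ := TopologicalSpace.denseSeq (ℝ × ℝ)
  let a : ℕ → ℕ → ℝ := fun n i => if d i ∈ Ω then u n (d i) else 0
  have hcpt : IsCompact (Set.pi univ (fun _ : ℕ => Icc (0:ℝ) M)) :=
    isCompact_univ_pi fun _ => isCompact_Icc
  obtain ⟨l, -, φ, hφ, hl⟩ := hcpt.tendsto_subseq (x := a) (by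
    intro n i _
    simp only [a]
    split_ifs with h
    · exact (hu n).2 _ h
    · exact ⟨le_rfl, hM.le⟩)
  rw [tendsto_pi_nhds] at hl
  let 𝒰 : Ultrafilter ℕ := Filter.hyperfilter ℕ
  have h𝒰 : (𝒰 : Filter ℕ) ≤ Filter.atTop := by
    rw [← Nat.cofinite_eq_atTop]; exact Filter.hyperfilter_le_cofinite
  have hex : ∀ x, ∃ y, x ∈ Ω → (y ∈ Icc (0:ℝ) M ∧
      Filter.Tendsto (fun n => u (φ n) x) 𝒰 (nhds y)) := by
    intro x
    by_cases hx : x ∈ Ω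
    · obtain ⟨y, hy, hy2⟩ := (isCompact_Icc (a := (0:ℝ)) (b := M)).ultrafilter_le_nhds
        (𝒰.map (fun n => u (φ n) x)) (by
          rw [Filter.le_principal_iff]
          change ∀ᶠ n in (𝒰 : Filter ℕ), u (φ n) x ∈ Icc (0:ℝ) M
          exact Filter.Eventually.of_forall fun n => (hu _).2 x hx)
      exact ⟨y, fun _ => ⟨hy, hy2⟩⟩
    · exact ⟨0, fun h => absurd h hx⟩
  choose v hv using hex
  have hvC : MemCM Ω M v := by
    refine ⟨⟨hΩconv, ?_⟩, fun x hx => (hv x hx).1⟩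
    intro x hx y hy s t hs ht hst
    have h1 := (hv _ (hΩconv hx hy hs ht hst)).2
    have h2 := ((hv x hx).2.const_smul s).add ((hv y hy).2.const_smul t)
    exact le_of_tendsto_of_tendsto' h1 h2 fun n => (hu (φ n)).1.2 hx hy hs ht hst
  have hlim : ∀ y ∈ interior Ω, Filter.Tendsto (fun n => u (φ n) y) Filter.atTop (nhds (v y)) := by
    intro x hx
    obtain ⟨r, hr, hb⟩ := Metric.isOpen_iff.1 isOpen_interior x hx
    have hb' : Metric.ball x r ⊆ Ω := hb.trans interior_subset
    rw [Metric.tendsto_nhds]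
    intro ε hε
    set L := 4 * M / r with hL
    have hLp : 0 < L := by positivity
    obtain ⟨z, hz, i, rfl⟩ := Metric.dense_iff.1 (TopologicalSpace.denseRange_denseSeq (ℝ × ℝ)) x
      (min (r / 2) (ε / (3 * L))) (by positivity)
    change d i ∈ _ at hz
    rw [Metric.mem_ball, lt_min_iff] at hz
    have hdΩ : d i ∈ Ω := hb' (by rw [Metric.mem_ball]; linarith [hz.1])
    have hl' : Filter.Tendsto (fun n => u (φ n) (d i)) Filter.atTop (nhds (l i)) := by
      simpa [a, hdΩ, Function.comp_def] using hl i
    have hlv : l i = v (d i) := tendsto_nhds_unique (hl'.mono_left h𝒰) (hv _ hdΩ).2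
    rw [hlv] at hl'
    have hsm : L * dist (d i) x < ε / 3 := by
      have := mul_lt_mul_of_pos_left hz.2 hLp
      calc _ < _ := this
        _ = _ := by field_simp
    filter_upwards [Metric.tendsto_nhds.1 hl' (ε / 3) (by positivity)] with n hn
    have h1 := memCM_lip (hu (φ n)) hr hb' hz.1
    have h2 := memCM_lip hvC hr hb' hz.1
    rw [Real.dist_eq] at hn ⊢
    rw [abs_lt] at *
    rw [abs_le] at *
    constructor <;> linarith [h1.1, h1.2, h2.1, h2.2]
  have hfin : volume Ω < ⊤ := hΩc.measure_lt_top
  have : IsFiniteMeasure (volume.restrict Ω) := ⟨by simpa using hfin⟩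
  have hΩm : MeasurableSet Ω := hΩc.isClosed.measurableSet
  refine ⟨φ, hφ, v, hvC, ?_, ?_⟩
  · refine tendsto_integral_of_dominated_convergence (fun _ => K)
      (fun n => (fgrad_meas hf _).aestronglyMeasurable) (integrable_const _)
      (fun n => Filter.Eventually.of_forall fun x => by simpa using hK _) ?_
    have h1 : ∀ᵐ x, ∀ n, x ∈ interior Ω → DifferentiableAt ℝ (u (φ n)) x :=
      ae_all_iff.2 fun n => cvx_ae_diff (hu _).1
    rw [ae_restrict_iff' hΩm]
    filter_upwards [h1, cvx_ae_diff hvC.1, ae_interior hΩconv] with x hx1 hx2 hx3 hx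
    have hxi := hx3 hx
    exact (hf.tendsto _).comp (grad_tendsto hxi (fun n => (hu (φ n)).1) (fun n => hx1 n hxi)
      (hx2 hxi) hlim)
  · have hmeas : ∀ w, MemCM Ω M w → AEStronglyMeasurable w (volume.restrict Ω) := by
      intro w hw
      have h1 : AEStronglyMeasurable w (volume.restrict (interior Ω)) :=
        hw.1.continuousOn_interior.aestronglyMeasurable isOpen_interior.measurableSet
      have h2 : volume.restrict Ω = volume.restrict (interior Ω) := by
        apply Measure.restrict_congr_set
        filter_upwards [ae_interior hΩconv] with x hx
        exact propext ⟨fun h => hx h, fun h => interior_subset h⟩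
      rwa [h2]
    refine tendsto_integral_of_dominated_convergence (fun _ => M)
      (fun n => hmeas _ (hu _)) (integrable_const _) (fun n => ?_) ?_
    · rw [ae_restrict_iff' hΩm]
      refine Filter.Eventually.of_forall fun x hx => ?_
      have := (hu (φ n)).2 x hx
      rw [Real.norm_eq_abs, abs_of_nonneg this.1]; exact this.2
    · rw [ae_restrict_iff' hΩm]
      filter_upwards [ae_interior hΩconv] with x hx3 hx
      exact hlim x (hx3 hx)

lemma exists_lex {Ω : Set (ℝ × ℝ)} (hΩc : IsCompact Ω) (hΩconv : Convex ℝ Ω) {M : ℝ} (hM : 0 < M)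
    {f : ℝ × ℝ → ℝ} (hf : Continuous f) {K : ℝ} (hK : ∀ ξ, |f ξ| ≤ K) :
    ∃ u, Minimizes f Ω M u ∧ ∀ v, Minimizes f Ω M v → ∫ x in Ω, u x ≤ ∫ x in Ω, v x := by
  have hfin : volume Ω < ⊤ := hΩc.measure_lt_top
  have hΩm : MeasurableSet Ω := hΩc.isClosed.measurableSet
  have hex : ∃ u, Minimizes f Ω M u := by
    let S : Set ℝ := NF f Ω '' {u | MemCM Ω M u}
    have hne : S.Nonempty := ⟨_, fun _ => 0, ⟨convexOn_const _ hΩconv, fun x _ => ⟨le_rfl, hM.le⟩⟩, rfl⟩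
    have hbdd : BddBelow S := by
      refine ⟨-(K * volume.real Ω), ?_⟩
      rintro _ ⟨u, -, rfl⟩
      have := norm_setIntegral_le_of_norm_le_const (μ := volume) (s := Ω)
        (f := fun x => f (grad2 u x)) (C := K) hfin
        (fun x _ => by simpa using hK _)
      rw [Real.norm_eq_abs, abs_le] at this
      exact this.1
    obtain ⟨a, -, ha, haS⟩ := exists_seq_tendsto_sInf hne hbdd
    choose u hu hua using haS
    obtain ⟨φ, hφ, v, hv, h1, -⟩ := cm_compact hΩc hΩconv hM hf hK u hu
    have h2 : Filter.Tendsto (fun n => NF f Ω (u (φ n))) Filter.atTop (nhds (sInf S)) := by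
      simp only [hua]; exact ha.comp hφ.tendsto_atTop
    have h3 := tendsto_nhds_unique h1 h2
    refine ⟨v, hv, fun w hw => ?_⟩
    rw [h3]; exact csInf_le hbdd ⟨w, hw, rfl⟩
  let S : Set ℝ := (fun u : ℝ × ℝ → ℝ => ∫ x in Ω, u x) '' {u | Minimizes f Ω M u}
  obtain ⟨u0, hu0⟩ := hex
  have hne : S.Nonempty := ⟨_, u0, hu0, rfl⟩
  have hbdd : BddBelow S := by
    refine ⟨0, ?_⟩
    rintro _ ⟨u, hu, rfl⟩
    exact setIntegral_nonneg hΩm fun x hx => (hu.1.2 x hx).1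
  obtain ⟨a, -, ha, haS⟩ := exists_seq_tendsto_sInf hne hbdd
  choose u hu hua using haS
  simp only at hua
  obtain ⟨φ, hφ, v, hv, h0, h1⟩ := cm_compact hΩc hΩconv hM hf hK u (fun n => (hu n).1)
  have h2 : Filter.Tendsto (fun n => ∫ x in Ω, u (φ n) x) Filter.atTop (nhds (sInf S)) := by
    simp only [hua]; exact ha.comp hφ.tendsto_atTop
  have h3 := tendsto_nhds_unique h1 h2
  refine ⟨v, ⟨hv, fun w hw => ?_⟩, fun w hw => ?_⟩
  · exact le_of_tendsto' h0 fun n => (hu (φ n)).2 w hw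
  · rw [h3]; exact csInf_le hbdd ⟨w, hw, rfl⟩

lemma join_compact {s t : Set ((ℝ × ℝ) × ℝ)} (hs : IsCompact s) (ht : IsCompact t) :
    IsCompact (convexJoin ℝ s t) := by
  have h := ((isCompact_Icc (a := (0:ℝ)) (b := 1)).prod (hs.prod ht)).image
    (f := fun p : ℝ × (((ℝ × ℝ) × ℝ) × ((ℝ × ℝ) × ℝ)) => p.2.1 + p.1 • (p.2.2 - p.2.1))
    (by fun_prop)
  convert h using 1
  ext x
  simp only [mem_convexJoin, segment_eq_image', mem_image, mem_prod]
  constructor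
  · rintro ⟨a, ha, b, hb, θ, hθ, rfl⟩
    exact ⟨(θ, a, b), ⟨hθ, ha, hb⟩, rfl⟩
  · rintro ⟨⟨θ, a, b⟩, ⟨hθ, ha, hb⟩, rfl⟩
    exact ⟨a, ha, b, hb, θ, hθ, rfl⟩

/-- truncated epigraph over a set -/
def tepi (R : Set (ℝ × ℝ)) (u : ℝ × ℝ → ℝ) (m : ℝ) : Set ((ℝ × ℝ) × ℝ) :=
  {p | p.1 ∈ R ∧ u p.1 ≤ p.2 ∧ p.2 ≤ m}

lemma tepi_convex {R : Set (ℝ × ℝ)} {u : ℝ × ℝ → ℝ} (m : ℝ) (hu : ConvexOn ℝ R u) :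
    Convex ℝ (tepi R u m) := by
  have h1 := hu.convex_epigraph
  have h2 : Convex ℝ {p : (ℝ × ℝ) × ℝ | p.2 ≤ m} :=
    convex_halfSpace_le (LinearMap.isLinear (LinearMap.snd ℝ (ℝ × ℝ) ℝ)) m
  convert h1.inter h2 using 1
  ext p; simp [tepi, and_assoc]

lemma tepi_compact {R : Set (ℝ × ℝ)} {u : ℝ × ℝ → ℝ} (m : ℝ) (hR : IsCompact R)
    (hu : ContinuousOn u R) : IsCompact (tepi R u m) := by
  have h := (hR.prod (isCompact_Icc (a := (0:ℝ)) (b := 1))).image_of_continuousOn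
    (f := fun p : (ℝ × ℝ) × ℝ => (p.1, u p.1 + p.2 * (max (u p.1) m - u p.1))) (by
      have : ContinuousOn (fun p : (ℝ × ℝ) × ℝ => u p.1) (R ×ˢ Icc (0:ℝ) 1) :=
        hu.comp continuousOn_fst fun p hp => hp.1
      exact continuousOn_fst.prodMk
        (this.add (continuousOn_snd.mul ((this.sup continuousOn_const).sub this))))
  have hcl : IsClosed {p : (ℝ × ℝ) × ℝ | p.2 ≤ m} := isClosed_le continuous_snd continuous_const
  convert h.inter_right hcl using 1
  ext ⟨x, z⟩
  simp only [tepi, mem_ofPred_eq, mem_inter_iff, mem_image, mem_prod]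
  constructor
  · rintro ⟨h1, h2, h3⟩
    refine ⟨?_, h3⟩
    have hmx := max_eq_right (h2.trans h3)
    rcases (h2.trans h3).eq_or_lt with h4 | h4
    · exact ⟨(x, 0), ⟨h1, by simp⟩, by simp only [Prod.mk.injEq, true_and]; linarith⟩
    · refine ⟨(x, (z - u x) / (m - u x)), ⟨h1, ?_, ?_⟩, ?_⟩
      · apply div_nonneg <;> linarith
      · change _ / _ ≤ _; rw [div_le_one] <;> linarith
      · simp only [Prod.mk.injEq, true_and, hmx]; rw [div_mul_cancel₀ _ (by linarith)]; ring
  · rintro ⟨⟨⟨x', t⟩, ⟨h1, h2, h3⟩, he⟩, h4⟩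
    simp only [Prod.mk.injEq] at he h1 h2 h3
    obtain ⟨rfl, rfl⟩ := he
    refine ⟨h1, ?_, h4⟩
    have : 0 ≤ t * (max (u x') m - u x') := mul_nonneg h2 (by linarith [le_max_left (u x') m])
    linarith

lemma cap {Ω U : Set (ℝ × ℝ)} {u : ℝ × ℝ → ℝ} (hu : ConvexOn ℝ Ω u) (hU : U ⊆ interior Ω)
    (hc : ContinuousOn u U)
    {x₀ : ℝ × ℝ} {ρ : ℝ} (hρ : 0 < ρ) (hb : Metric.closedBall x₀ ρ ⊆ U)
    (hd : DifferentiableAt ℝ u x₀)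
    (hex : (x₀, u x₀) ∈ Set.extremePoints ℝ (epi Ω u)) :
    ∃ (l : (ℝ × ℝ) →L[ℝ] ℝ) (c : ℝ), u x₀ < l x₀ + c ∧
      ∀ y, dist y x₀ = ρ → l y + c < u y := by
  have hbΩ : Metric.closedBall x₀ ρ ⊆ Ω := hb.trans (hU.trans interior_subset)
  obtain ⟨m, hm⟩ : ∃ m, ∀ y ∈ Metric.closedBall x₀ ρ, u y ≤ m := by
    obtain ⟨m, hm⟩ := ((isCompact_closedBall x₀ ρ).image_of_continuousOn (hc.mono hb)).bddAbove
    exact ⟨m, fun y hy => hm ⟨y, hy, rfl⟩⟩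
  obtain ⟨p, q⟩ := x₀
  let R1 : Set (ℝ × ℝ) := {p - ρ} ×ˢ Icc (q - ρ) (q + ρ)
  let R2 : Set (ℝ × ℝ) := {p + ρ} ×ˢ Icc (q - ρ) (q + ρ)
  let R3 : Set (ℝ × ℝ) := Icc (p - ρ) (p + ρ) ×ˢ {q - ρ}
  let R4 : Set (ℝ × ℝ) := Icc (p - ρ) (p + ρ) ×ˢ {q + ρ}
  have hball : ∀ y : ℝ × ℝ, y ∈ Metric.closedBall (p, q) ρ ↔
      (p - ρ ≤ y.1 ∧ y.1 ≤ p + ρ) ∧ (q - ρ ≤ y.2 ∧ y.2 ≤ q + ρ) := by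
    intro y
    rw [Metric.mem_closedBall, Prod.dist_eq, max_le_iff, Real.dist_eq, Real.dist_eq, abs_le, abs_le]
    constructor
    · rintro ⟨⟨h1, h2⟩, h3, h4⟩
      simp only at h1 h2 h3 h4
      refine ⟨⟨?_, ?_⟩, ?_, ?_⟩ <;> linarith
    · rintro ⟨⟨h1, h2⟩, h3, h4⟩
      refine ⟨⟨?_, ?_⟩, ?_, ?_⟩ <;> simp only <;> linarith
  have hR1 : R1 ⊆ Metric.closedBall (p, q) ρ := by
    rintro ⟨a, b⟩ ⟨h1, h2, h3⟩
    simp only [mem_singleton_iff] at h1 h2 h3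
    rw [hball]; subst h1; refine ⟨⟨?_, ?_⟩, ?_, ?_⟩ <;> simp only <;> linarith
  have hR2 : R2 ⊆ Metric.closedBall (p, q) ρ := by
    rintro ⟨a, b⟩ ⟨h1, h2, h3⟩
    simp only [mem_singleton_iff] at h1 h2 h3
    rw [hball]; subst h1; refine ⟨⟨?_, ?_⟩, ?_, ?_⟩ <;> simp only <;> linarith
  have hR3 : R3 ⊆ Metric.closedBall (p, q) ρ := by
    rintro ⟨a, b⟩ ⟨⟨h1, h2⟩, h3⟩
    simp only [mem_singleton_iff] at h1 h2 h3
    rw [hball]; subst h3; refine ⟨⟨?_, ?_⟩, ?_, ?_⟩ <;> simp only <;> linarith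
  have hR4 : R4 ⊆ Metric.closedBall (p, q) ρ := by
    rintro ⟨a, b⟩ ⟨⟨h1, h2⟩, h3⟩
    simp only [mem_singleton_iff] at h1 h2 h3
    rw [hball]; subst h3; refine ⟨⟨?_, ?_⟩, ?_, ?_⟩ <;> simp only <;> linarith
  have hx1 : (p, q) ∉ R1 := fun h => by have : p = p - ρ := h.1; linarith
  have hx2 : (p, q) ∉ R2 := fun h => by have : p = p + ρ := h.1; linarith
  have hx3 : (p, q) ∉ R3 := fun h => by have : q = q - ρ := h.2; linarith
  have hx4 : (p, q) ∉ R4 := fun h => by have : q = q + ρ := h.2; linarith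
  have good : ∀ R : Set (ℝ × ℝ), R ⊆ Metric.closedBall (p, q) ρ → IsCompact R → Convex ℝ R →
      R.Nonempty → IsCompact (tepi R u m) ∧ Convex ℝ (tepi R u m) ∧ (tepi R u m).Nonempty ∧
        tepi R u m ⊆ epi Ω u := by
    intro R hR hRc hRv hRn
    refine ⟨tepi_compact m hRc (hc.mono (hR.trans hb)), tepi_convex m (hu.subset (hR.trans hbΩ) hRv),
      ?_, ?_⟩
    · obtain ⟨y, hy⟩ := hRn
      exact ⟨(y, u y), hy, le_rfl, hm y (hR hy)⟩
    · rintro z ⟨h1, h2, -⟩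
      exact ⟨hbΩ (hR h1), h2⟩
  obtain ⟨c1, v1, n1, e1⟩ := good R1 hR1 (isCompact_singleton.prod isCompact_Icc)
    ((convex_singleton _).prod (convex_Icc _ _)) ⟨(p - ρ, q), rfl, by constructor <;> simp only <;> linarith⟩
  obtain ⟨c2, v2, n2, e2⟩ := good R2 hR2 (isCompact_singleton.prod isCompact_Icc)
    ((convex_singleton _).prod (convex_Icc _ _)) ⟨(p + ρ, q), rfl, by constructor <;> simp only <;> linarith⟩
  obtain ⟨c3, v3, n3, e3⟩ := good R3 hR3 (isCompact_Icc.prod isCompact_singleton)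
    ((convex_Icc _ _).prod (convex_singleton _)) ⟨(p, q - ρ), by constructor <;> simp only <;> linarith, rfl⟩
  obtain ⟨c4, v4, n4, e4⟩ := good R4 hR4 (isCompact_Icc.prod isCompact_singleton)
    ((convex_Icc _ _).prod (convex_singleton _)) ⟨(p, q + ρ), by constructor <;> simp only <;> linarith, rfl⟩
  set A : Set ((ℝ × ℝ) × ℝ) := (tepi R1 u m ∪ tepi R2 u m) ∪ (tepi R3 u m ∪ tepi R4 u m) with hA
  have hhull : convexHull ℝ A =
      convexJoin ℝ (convexJoin ℝ (tepi R1 u m) (tepi R2 u m))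
        (convexJoin ℝ (tepi R3 u m) (tepi R4 u m)) := by
    rw [hA, convexHull_union (n1.mono subset_union_left) (n3.mono subset_union_left),
      convexHull_union n1 n2, convexHull_union n3 n4, v1.convexHull_eq, v2.convexHull_eq,
      v3.convexHull_eq, v4.convexHull_eq]
  have hcomp : IsCompact (convexHull ℝ A) := by
    rw [hhull]; exact join_compact (join_compact c1 c2) (join_compact c3 c4)
  have hsub : convexHull ℝ A ⊆ epi Ω u :=
    convexHull_min (union_subset (union_subset e1 e2) (union_subset e3 e4)) hu.convex_epigraph
  have hnot : ((p, q), u (p, q)) ∉ convexHull ℝ A := by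
    intro h
    have := extremePoints_convexHull_subset
      (inter_extremePoints_subset_extremePoints_of_subset hsub ⟨h, hex⟩)
    rcases this with (h | h) | (h | h)
    exacts [hx1 h.1, hx2 h.1, hx3 h.1, hx4 h.1]
  obtain ⟨L, c, hL1, hL2⟩ := geometric_hahn_banach_point_closed (convex_convexHull ℝ A)
    hcomp.isClosed hnot
  have hL : ∀ y z, L (y, z) = L (y, 0) + z * L (0, 1) := by
    intro y z
    rw [← smul_eq_mul, ← map_smul, ← map_add]; simp
  set b := L (0, 1) with hbdef
  set N : ℝ := |b| + 1 with hN
  have hbN : 0 < b + N := by have := neg_abs_le b; linarith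
  set P := fderiv ℝ u (p, q) with hP
  -- new functional : L y 0 + b z + N (z - u x0 - P (y - x0)) 
  let l : (ℝ × ℝ) →L[ℝ] ℝ :=
    (b + N)⁻¹ • (N • P - L.comp (ContinuousLinearMap.inl ℝ (ℝ × ℝ) ℝ))
  refine ⟨l, (b + N)⁻¹ * (c + N * (u (p, q) - P (p, q))), ?_, ?_⟩
  · have e : l (p, q) = (b + N)⁻¹ * (N * P (p, q) - L ((p, q), 0)) := by simp [l]
    rw [e, ← mul_add, inv_mul_eq_div, lt_div_iff₀ hbN]
    rw [hL] at hL1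
    linarith
  · intro y hy
    have e : l y = (b + N)⁻¹ * (N * P y - L (y, 0)) := by simp [l]
    rw [e, ← mul_add, inv_mul_eq_div, div_lt_iff₀ hbN]
    have hyb : y ∈ Metric.closedBall (p, q) ρ := by rw [Metric.mem_closedBall]; exact hy.le
    have hyA : (y, u y) ∈ A := by
      have hbox := (hball y).1 hyb
      have hmy := hm y hyb
      rw [Prod.dist_eq, Real.dist_eq, Real.dist_eq] at hy
      simp only at hy
      rcases max_choice |y.1 - p| |y.2 - q| with h | h
      · rw [h] at hy
        rcases abs_choice (y.1 - p) with h' | h'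
        · exact Or.inl (Or.inr ⟨⟨by change y.1 = p + ρ; linarith, hbox.2⟩, le_rfl, hmy⟩)
        · exact Or.inl (Or.inl ⟨⟨by change y.1 = p - ρ; linarith, hbox.2⟩, le_rfl, hmy⟩)
      · rw [h] at hy
        rcases abs_choice (y.2 - q) with h' | h'
        · exact Or.inr (Or.inr ⟨⟨hbox.1, by change y.2 = q + ρ; linarith⟩, le_rfl, hmy⟩)
        · exact Or.inr (Or.inl ⟨⟨hbox.1, by change y.2 = q - ρ; linarith⟩, le_rfl, hmy⟩)
    have h1 := hL2 _ (subset_convexHull ℝ A hyA)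
    rw [hL] at h1
    have h2 := tangent_le hu (interior_subset (hU (hb (Metric.mem_closedBall_self hρ.le)))) (hbΩ hyb) hd
    rw [← hP, map_sub] at h2
    have hNp : 0 ≤ N := by positivity
    nlinarith [mul_le_mul_of_nonneg_left h2 hNp]

lemma strong_pt {Ω U : Set (ℝ × ℝ)} {u : ℝ × ℝ → ℝ} (hu : ConvexOn ℝ Ω u) (hUo : IsOpen U)
    (hU : U ⊆ interior Ω) (hdiff : DifferentiableOn ℝ u U)
    {x₀ : ℝ × ℝ} {ρ : ℝ} (hρ : 0 < ρ) (hb : Metric.closedBall x₀ ρ ⊆ U)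
    (hex : (x₀, u x₀) ∈ Set.extremePoints ℝ (epi Ω u)) :
    ∃ x₁ ∈ Metric.ball x₀ ρ, ∃ δ > 0, ∀ y ∈ Metric.closedBall x₀ ρ,
      u x₁ + fderiv ℝ u x₁ (y - x₁) + δ * ‖y - x₁‖ ^ 2 ≤ u y := by
  have hda : ∀ x ∈ U, DifferentiableAt ℝ u x := fun x hx => hdiff.differentiableAt (hUo.mem_nhds hx)
  obtain ⟨l, c, hl1, hl2⟩ := cap hu hU hdiff.continuousOn hρ hb
    (hda _ (hb (Metric.mem_closedBall_self hρ.le))) hex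
  set η := l x₀ + c - u x₀ with hη
  have hηp : 0 < η := by linarith
  set δ := η / (2 * ρ ^ 2) with hδ
  have hδp : 0 < δ := by positivity
  let g : ℝ × ℝ → ℝ := fun y => u y - (l y + c) - δ * ((y.1 - x₀.1) ^ 2 + (y.2 - x₀.2) ^ 2)
  have hgc : ContinuousOn g (Metric.closedBall x₀ ρ) := by
    have := hdiff.continuousOn.mono hb
    fun_prop
  obtain ⟨x₁, hx₁, hmin⟩ := (isCompact_closedBall x₀ ρ).exists_isMinOn
    ⟨x₀, Metric.mem_closedBall_self hρ.le⟩ hgc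
  have hball : x₁ ∈ Metric.ball x₀ ρ := by
    rw [Metric.mem_ball]
    refine lt_of_le_of_ne hx₁ fun h => ?_
    have h1 := hl2 x₁ h
    have h2 : g x₁ ≤ g x₀ := hmin (Metric.mem_closedBall_self hρ.le)
    have h3 : (x₁.1 - x₀.1) ^ 2 ≤ ρ ^ 2 := by
      rw [sq_le_sq, abs_of_pos hρ, ← Real.dist_eq, ← h]; exact le_max_left _ _
    have h4 : (x₁.2 - x₀.2) ^ 2 ≤ ρ ^ 2 := by
      rw [sq_le_sq, abs_of_pos hρ, ← Real.dist_eq, ← h]; exact le_max_right _ _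
    have h5 : δ * ((x₁.1 - x₀.1) ^ 2 + (x₁.2 - x₀.2) ^ 2) ≤ η := by
      calc _ ≤ δ * (2 * ρ ^ 2) := by gcongr; linarith
        _ = η := by rw [hδ]; field_simp
    simp only [g, sub_self] at h2
    norm_num at h2
    linarith
  let P : (ℝ × ℝ) →L[ℝ] ℝ := l + (2 * δ) • ((x₁.1 - x₀.1) • ContinuousLinearMap.fst ℝ ℝ ℝ +
    (x₁.2 - x₀.2) • ContinuousLinearMap.snd ℝ ℝ ℝ)
  have hP : ∀ y ∈ Metric.closedBall x₀ ρ,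
      u x₁ + P (y - x₁) + δ * ((y.1 - x₁.1) ^ 2 + (y.2 - x₁.2) ^ 2) ≤ u y := by
    intro y hy
    have h2 : g x₁ ≤ g y := hmin hy
    simp only [g] at h2
    have h3 : P (y - x₁) = l y - l x₁ + (2 * δ) * ((x₁.1 - x₀.1) * (y.1 - x₁.1) +
      (x₁.2 - x₀.2) * (y.2 - x₁.2)) := by simp [P]; ring
    rw [h3]
    nlinarith
  have hfd : fderiv ℝ u x₁ = P := by
    have h1 : HasFDerivAt (fun y => u x₁ + P (y - x₁)) P x₁ :=
      (P.hasFDerivAt.comp x₁ ((hasFDerivAt_id x₁).sub_const x₁)).const_add _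
    rw [← touch_fderiv h1.differentiableAt (hda x₁ (hb hx₁)) ?_ (by simp), h1.fderiv]
    filter_upwards [Metric.isOpen_ball.mem_nhds hball] with y hy
    have := hP y (Metric.ball_subset_closedBall hy)
    have : 0 ≤ δ * ((y.1 - x₁.1) ^ 2 + (y.2 - x₁.2) ^ 2) := by positivity
    linarith
  refine ⟨x₁, hball, δ, hδp, fun y hy => ?_⟩
  rw [hfd]
  refine le_trans ?_ (hP y hy)
  gcongr
  rw [Prod.norm_def]
  rcases max_choice ‖(y - x₁).1‖ ‖(y - x₁).2‖ with h | h <;> rw [h] <;>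
    simp only [Real.norm_eq_abs, sq_abs, Prod.fst_sub, Prod.snd_sub]
  · nlinarith [sq_nonneg (y.2 - x₁.2)]
  · nlinarith [sq_nonneg (y.1 - x₁.1)]

lemma nose_loc {Ω : Set (ℝ × ℝ)} {w : ℝ × ℝ → ℝ} (hw : ConvexOn ℝ Ω w)
    (hd : DifferentiableAt ℝ w 0) {δ ρ : ℝ} (hδ : 0 < δ) (hρ : 0 < ρ)
    (hb : Metric.closedBall 0 ρ ⊆ Ω)
    (hs : ∀ y ∈ Metric.closedBall (0 : ℝ × ℝ) ρ, w 0 + fderiv ℝ w 0 y + δ * ‖y‖ ^ 2 ≤ w y) :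
    ∃ ε₀ > 0, ∀ ε, 0 < ε → ε < ε₀ → ∀ y ∈ Ω, ∀ s : ℝ, 1 < s → s • y ∈ Ω → ρ ≤ ‖y‖ →
      s * (w y - w 0 + ε) ≤ w (s • y) - w 0 + ε := by
  set P := fderiv ℝ w 0 with hP
  have h0 : (0 : ℝ × ℝ) ∈ Ω := hb (Metric.mem_closedBall_self hρ.le)
  have h1 := (hd.hasFDerivAt.isLittleO).def (c := δ * ρ / 2) (by positivity)
  obtain ⟨t, ht, htb⟩ := Metric.eventually_nhds_iff.1 h1
  set t₀ := min (t / 2) (ρ / 2) with ht0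
  have ht0p : 0 < t₀ := by positivity
  refine ⟨δ * ρ * t₀ / 2, by positivity, ?_⟩
  intro ε hε hε0 y hy s hs1 hsy hyρ
  have hY : 0 < ‖y‖ := by linarith
  set α := t₀ / ‖y‖ with hα
  have hαp : 0 < α := by positivity
  have hαY : α * ‖y‖ = t₀ := by rw [hα]; field_simp
  have hα1 : α < 1 := by
    rw [hα, div_lt_one hY]; have := min_le_right (t / 2) (ρ / 2); linarith
  -- v(αy)
  have hn : ‖α • y‖ = t₀ := by rw [norm_smul, Real.norm_eq_abs, abs_of_pos hαp, hαY]
  have hv1 : w (α • y) - w 0 - α * P y ≤ δ * ρ / 2 * t₀ := by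
    have := htb (y := α • y) (by
      rw [dist_zero_right, hn]; have := min_le_left (t / 2) (ρ / 2); linarith)
    simp only [sub_zero, hn, map_smul, smul_eq_mul, Real.norm_eq_abs] at this
    exact (le_abs_self _).trans this
  -- v(y) ≥ δρ‖y‖
  have hv2 : δ * ρ * ‖y‖ ≤ w y - w 0 - P y := by
    set β := ρ / ‖y‖ with hβ
    have hβp : 0 < β := by positivity
    have hβ1 : β ≤ 1 := by rw [hβ, div_le_one hY]; exact hyρ
    have hβY : β * ‖y‖ = ρ := by rw [hβ]; field_simp
    have hnb : ‖β • y‖ = ρ := by rw [norm_smul, Real.norm_eq_abs, abs_of_pos hβp, hβY]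
    have h2 := hs (β • y) (by rw [mem_closedBall_zero_iff, hnb])
    have h3 := hw.2 hy h0 hβp.le (sub_nonneg.2 hβ1) (by ring)
    simp only [smul_zero, add_zero, smul_eq_mul] at h3
    rw [hnb, map_smul, smul_eq_mul] at h2
    have h4 : β * (δ * ρ * ‖y‖) ≤ β * (w y - w 0 - P y) := by
      have : β * (δ * ρ * ‖y‖) = δ * ρ ^ 2 := by rw [← hβY]; ring
      rw [this]; linarith
    exact le_of_mul_le_mul_left h4 hβp
  -- convexity
  have hsα : 0 < s - α := by linarith
  have hαy : α • y ∈ Ω := by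
    have := hw.1 hy h0 hαp.le (sub_nonneg.2 hα1.le) (by ring)
    simpa using this
  have h5 : w (((s - 1) / (s - α)) • α • y + ((1 - α) / (s - α)) • s • y) ≤
      ((s - 1) / (s - α)) • w (α • y) + ((1 - α) / (s - α)) • w (s • y) := hw.2 hαy hsy
    (div_nonneg (by linarith) hsα.le) (div_nonneg (by linarith) hsα.le)
    (by field_simp; ring)
  have e : ((s - 1) / (s - α)) • α • y + ((1 - α) / (s - α)) • s • y = y := by
    rw [smul_smul, smul_smul, ← add_smul]
    convert one_smul ℝ y
    field_simp; ring
  rw [e, smul_eq_mul, smul_eq_mul, div_mul_eq_mul_div, div_mul_eq_mul_div, ← add_div,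
    le_div_iff₀ hsα] at h5
  have h6 : w (α • y) - w 0 - α * P y + ε ≤ α * (w y - w 0 - P y) := by
    have : α * (δ * ρ * ‖y‖) ≤ α * (w y - w 0 - P y) := mul_le_mul_of_nonneg_left hv2 hαp.le
    have h7 : α * (δ * ρ * ‖y‖) = δ * ρ * t₀ := by rw [← hαY]; ring
    linarith
  have h8 : (1 - α) * (s * (w y - w 0 + ε)) ≤ (1 - α) * (w (s • y) - w 0 + ε) := by
    have h9 := mul_le_mul_of_nonneg_left h6 (by linarith : 0 ≤ s - 1)
    have h10 : 0 ≤ α * (s - 1) * ε := by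
      have : 0 ≤ s - 1 := by linarith
      positivity
    nlinarith
  exact le_of_mul_le_mul_left h8 (by linarith)

/-- infimum of perspective values: the convex hull with the origin -/
noncomputable def nose (Ω : Set (ℝ × ℝ)) (u : ℝ × ℝ → ℝ) (x : ℝ × ℝ) : ℝ :=
  sInf {r | ∃ s : ℝ, 1 ≤ s ∧ s • x ∈ Ω ∧ r = u (s • x) / s}

/-- the set where the hull is strictly below -/
def noseSet (Ω : Set (ℝ × ℝ)) (u : ℝ × ℝ → ℝ) : Set (ℝ × ℝ) :=
  {x | x ∈ Ω ∧ ∃ s : ℝ, 1 < s ∧ s • x ∈ Ω ∧ u (s • x) < s * u x}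

section noseLemmas
variable {Ω : Set (ℝ × ℝ)} {u : ℝ × ℝ → ℝ} {m : ℝ}

lemma nose_lb (hm : m ≤ 0) (hmu : ∀ x ∈ Ω, m ≤ u x) {x : ℝ × ℝ} {s : ℝ} (hs : 1 ≤ s)
    (hsx : s • x ∈ Ω) : m ≤ u (s • x) / s := by
  rw [le_div_iff₀ (by linarith)]
  have := hmu _ hsx
  nlinarith

lemma nose_bdd (hm : m ≤ 0) (hmu : ∀ x ∈ Ω, m ≤ u x) (x : ℝ × ℝ) :
    BddBelow {r | ∃ s : ℝ, 1 ≤ s ∧ s • x ∈ Ω ∧ r = u (s • x) / s} := by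
  refine ⟨m, ?_⟩
  rintro r ⟨s, hs, hsx, rfl⟩
  exact nose_lb hm hmu hs hsx

lemma nose_le' (hm : m ≤ 0) (hmu : ∀ x ∈ Ω, m ≤ u x) {x : ℝ × ℝ} {s : ℝ} (hs : 1 ≤ s)
    (hsx : s • x ∈ Ω) : nose Ω u x ≤ u (s • x) / s :=
  csInf_le (nose_bdd hm hmu x) ⟨s, hs, hsx, rfl⟩

lemma nose_le (hm : m ≤ 0) (hmu : ∀ x ∈ Ω, m ≤ u x) {x : ℝ × ℝ} (hx : x ∈ Ω) :
    nose Ω u x ≤ u x := by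
  have := nose_le' hm hmu (x := x) le_rfl (by simpa using hx)
  simpa using this

lemma le_nose {x : ℝ × ℝ} (hx : x ∈ Ω) {c : ℝ} (h : ∀ s : ℝ, 1 ≤ s → s • x ∈ Ω → c ≤ u (s • x) / s) :
    c ≤ nose Ω u x := by
  refine le_csInf ⟨_, 1, le_rfl, by simpa using hx, rfl⟩ ?_
  rintro r ⟨s, hs, hsx, rfl⟩
  exact h s hs hsx

lemma nose_lt {x : ℝ × ℝ} (hx : x ∈ Ω) {c : ℝ} (h : nose Ω u x < c) :
    ∃ s : ℝ, 1 ≤ s ∧ s • x ∈ Ω ∧ u (s • x) / s < c := by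
  have hne : {r | ∃ s : ℝ, 1 ≤ s ∧ s • x ∈ Ω ∧ r = u (s • x) / s}.Nonempty :=
    ⟨_, 1, le_rfl, by simpa using hx, rfl⟩
  obtain ⟨r, ⟨s, hs, hsx, rfl⟩, hr⟩ := exists_lt_of_csInf_lt hne h
  exact ⟨s, hs, hsx, hr⟩

lemma nose_lt_of_mem (hm : m ≤ 0) (hmu : ∀ x ∈ Ω, m ≤ u x) {x : ℝ × ℝ} (hx : x ∈ noseSet Ω u) :
    nose Ω u x < u x := by
  obtain ⟨hxΩ, s, hs, hsx, h⟩ := hx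
  refine (nose_le' hm hmu hs.le hsx).trans_lt ?_
  rw [div_lt_iff₀ (by linarith)]; linarith

lemma nose_eq_of_not_mem (hm : m ≤ 0) (hmu : ∀ x ∈ Ω, m ≤ u x) {x : ℝ × ℝ} (hx : x ∈ Ω)
    (hn : x ∉ noseSet Ω u) : nose Ω u x = u x := by
  refine le_antisymm (nose_le hm hmu hx) (le_nose hx fun s hs hsx => ?_)
  rw [le_div_iff₀ (by linarith)]
  rcases hs.eq_or_lt with rfl | h
  · simp
  · by_contra hc
    exact hn ⟨hx, s, h, hsx, by linarith⟩

lemma nose_convex (hu : ConvexOn ℝ Ω u) (hm : m ≤ 0) (hmu : ∀ x ∈ Ω, m ≤ u x) :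
    ConvexOn ℝ Ω (nose Ω u) := by
  refine ⟨hu.1, ?_⟩
  intro x hx y hy a b ha hb hab
  refine le_of_forall_pos_le_add fun ε hε => ?_
  obtain ⟨s, hs, hsx, h1⟩ := nose_lt (u := u) hx (lt_add_of_pos_right (nose Ω u x) hε)
  obtain ⟨t, ht, hty, h2⟩ := nose_lt (u := u) hy (lt_add_of_pos_right (nose Ω u y) hε)
  have hs0 : 0 < s := by linarith
  have ht0 : 0 < t := by linarith
  have hτ : 0 < a / s + b / t := by
    rcases ha.eq_or_lt with rfl | h
    · have : b = 1 := by linarith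
      subst this; simp; linarith
    · positivity
  have hτ1 : a / s + b / t ≤ 1 := by
    have : a / s ≤ a := div_le_self ha hs
    have : b / t ≤ b := div_le_self hb ht
    linarith
  set τ := a / s + b / t with hτd
  have e : τ⁻¹ • (a • x + b • y) = (a / s / τ) • s • x + (b / t / τ) • t • y := by
    rw [smul_smul, smul_smul, smul_add, smul_smul, smul_smul]
    congr 2 <;> field_simp
  have hA : 0 ≤ a / s / τ := by positivity
  have hB : 0 ≤ b / t / τ := by positivity
  have hAB : a / s / τ + b / t / τ = 1 := by rw [← add_div, ← hτd, div_self hτ.ne']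
  have hmem : τ⁻¹ • (a • x + b • y) ∈ Ω := by rw [e]; exact hu.1 hsx hty hA hB hAB
  have h3 := hu.2 hsx hty hA hB hAB
  have h4 := nose_le' hm hmu ((one_le_inv₀ hτ).2 hτ1) hmem
  rw [← e] at h3
  rw [div_inv_eq_mul] at h4
  simp only [smul_eq_mul] at h3 ⊢
  have h5 : u (τ⁻¹ • (a • x + b • y)) * τ ≤ a * (u (s • x) / s) + b * (u (t • y) / t) := by
    calc _ ≤ (a / s / τ * u (s • x) + b / t / τ * u (t • y)) * τ := by gcongr
      _ = _ := by field_simp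
  have h6 : a * (u (s • x) / s) ≤ a * (nose Ω u x + ε) := by gcongr
  have h7 : b * (u (t • y) / t) ≤ b * (nose Ω u y + ε) := by gcongr
  have : a * ε + b * ε = ε := by rw [← add_mul, hab, one_mul]
  linarith

lemma smul_mem_of_le (hΩ : Convex ℝ Ω) (h0 : (0 : ℝ × ℝ) ∈ Ω) {x : ℝ × ℝ} {a b : ℝ} (ha : 0 ≤ a)
    (hab : a ≤ b) (hb : b • x ∈ Ω) : a • x ∈ Ω := by
  rcases (ha.trans hab).eq_or_lt with h | h
  · have : a = 0 := by linarith
    subst this; simpa using h0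
  · have := hΩ.smul_mem_of_zero_mem h0 hb (t := a / b) ⟨by positivity, by rwa [div_le_one h]⟩
    rwa [smul_smul, div_mul_cancel₀ _ h.ne'] at this

lemma ray_conv (hu : ConvexOn ℝ Ω u) (h0 : (0 : ℝ × ℝ) ∈ Ω) {x : ℝ × ℝ} {a b c : ℝ} (ha : 0 ≤ a)
    (hab : a < b) (hbc : b < c) (hc : c • x ∈ Ω) :
    u (b • x) * (c - a) ≤ (c - b) * u (a • x) + (b - a) * u (c • x) := by
  have hca : 0 < c - a := by linarith
  have hax : a • x ∈ Ω := smul_mem_of_le hu.1 h0 ha (by linarith) hc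
  have h5 : u (((c - b) / (c - a)) • a • x + ((b - a) / (c - a)) • c • x) ≤
      ((c - b) / (c - a)) • u (a • x) + ((b - a) / (c - a)) • u (c • x) := hu.2 hax hc
    (div_nonneg (by linarith) hca.le) (div_nonneg (by linarith) hca.le)
    (by field_simp; ring)
  have e : ((c - b) / (c - a)) • a • x + ((b - a) / (c - a)) • c • x = b • x := by
    rw [smul_smul, smul_smul, ← add_smul]
    congr 1
    field_simp; ring
  rwa [e, smul_eq_mul, smul_eq_mul, div_mul_eq_mul_div, div_mul_eq_mul_div, ← add_div,
    le_div_iff₀ hca] at h5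

lemma ray_P (hu : ConvexOn ℝ Ω u) (h0 : (0 : ℝ × ℝ) ∈ Ω) {x : ℝ × ℝ} {a b c : ℝ} (ha : 0 < a)
    (hab : a < b) (hbc : b < c) (hc : c • x ∈ Ω) (h : u (c • x) * b < c * u (b • x)) :
    a * u (b • x) < b * u (a • x) := by
  have h1 := ray_conv hu h0 ha.le hab hbc hc
  have h2 : (c - b) * (a * u (b • x)) < (c - b) * (b * u (a • x)) := by
    nlinarith [mul_le_mul_of_nonneg_left h1 (by linarith : 0 ≤ b),
      mul_lt_mul_of_pos_left h (by linarith : 0 < b - a)]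
  exact lt_of_mul_lt_mul_left h2 (by linarith)

/-- shrink the parameter -/
lemma ray_shrink (hu : ConvexOn ℝ Ω u) (h0 : (0 : ℝ × ℝ) ∈ Ω) {x : ℝ × ℝ} {s t : ℝ}
    (ht : 1 < t) (hts : t < s) (hs : s • x ∈ Ω) (h : u (s • x) < s * u x) :
    u (t • x) < t * u x := by
  have h1 := ray_conv hu h0 (a := 1) (by norm_num) ht hts hs
  simp only [one_smul] at h1
  have h2 : (s - 1) * u (t • x) < (s - 1) * (t * u x) := by
    nlinarith [mul_lt_mul_of_pos_left h (by linarith : 0 < t - 1)]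
  exact lt_of_mul_lt_mul_left h2 (by linarith)

end noseLemmas

/-- standing hypotheses for the scaling argument -/
structure CoreHyp (Ω U : Set (ℝ × ℝ)) (u : ℝ × ℝ → ℝ) (ρ m : ℝ) : Prop where
  comp : IsCompact Ω
  cvx : ConvexOn ℝ Ω u
  Uo : IsOpen U
  UΩ : U ⊆ interior Ω
  smooth : ContDiffOn ℝ 1 u U
  hρ : 0 < ρ
  ball : Metric.closedBall 0 (2 * ρ) ⊆ U
  far : ∀ y ∈ Ω, ∀ s : ℝ, 1 < s → s • y ∈ Ω → ρ ≤ ‖y‖ → s * u y ≤ u (s • y)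
  hm : m ≤ 0
  hmu : ∀ x ∈ Ω, m ≤ u x

/-- points improved by scaling by `k` -/
def setE (u : ℝ × ℝ → ℝ) (ρ k : ℝ) : Set (ℝ × ℝ) :=
  {x | x ∈ Metric.ball (0 : ℝ × ℝ) ρ ∧ u (k • x) < k * u x}

lemma scale_int (g : ℝ × ℝ → ℝ) (S : Set (ℝ × ℝ)) {k : ℝ} (hk : 0 < k) :
    k ^ 2 * ∫ x in {x | k • x ∈ S}, g (k • x) = ∫ x in S, g x := by
  rw [Measure.setIntegral_comp_smul_of_pos volume g _ hk]
  have h1 : k • {x | k • x ∈ S} = S := by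
    ext y
    rw [mem_smul_set_iff_inv_smul_mem₀ hk.ne']
    simp [smul_smul, hk.ne']
  rw [h1]
  simp [Module.finrank_prod]
  field_simp

namespace CoreHyp
variable {Ω U : Set (ℝ × ℝ)} {u : ℝ × ℝ → ℝ} {ρ m : ℝ}

lemma uΩ (h : CoreHyp Ω U u ρ m) : U ⊆ Ω := h.UΩ.trans interior_subset

lemma ballU (h : CoreHyp Ω U u ρ m) {x : ℝ × ℝ} (hx : ‖x‖ ≤ 2 * ρ) : x ∈ U :=
  h.ball (by simpa using hx)

lemma zero_mem (h : CoreHyp Ω U u ρ m) : (0 : ℝ × ℝ) ∈ Ω :=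
  h.uΩ (h.ballU (by simpa using h.hρ.le))

lemma diffAt (h : CoreHyp Ω U u ρ m) {x : ℝ × ℝ} (hx : x ∈ U) : DifferentiableAt ℝ u x :=
  (h.smooth.differentiableOn (by norm_num)).differentiableAt (h.Uo.mem_nhds hx)

lemma smul_mem_U (h : CoreHyp Ω U u ρ m) {x : ℝ × ℝ} (hx : ‖x‖ < ρ) {k : ℝ} (hk0 : 0 ≤ k)
    (hk : k ≤ 2) : k • x ∈ U := by
  refine h.ballU ?_
  rw [norm_smul, Real.norm_eq_abs, abs_of_nonneg hk0]
  gcongr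

lemma om_ball (h : CoreHyp Ω U u ρ m) {x : ℝ × ℝ} (hx : x ∈ noseSet Ω u) : ‖x‖ < ρ := by
  obtain ⟨hxΩ, s, hs, hsx, hlt⟩ := hx
  by_contra hc
  have := h.far x hxΩ s hs hsx (not_lt.1 hc)
  linarith

lemma om_U (h : CoreHyp Ω U u ρ m) : noseSet Ω u ⊆ U := fun x hx => by
  simpa using h.smul_mem_U (h.om_ball hx) (k := 1) (by norm_num) (by norm_num)

lemma E_open (h : CoreHyp Ω U u ρ m) {k : ℝ} (hk : 1 < k) (hk2 : k ≤ 2) : IsOpen (setE u ρ k) := by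
  have hc : ContinuousOn u U := h.smooth.continuousOn
  have hc1 : ContinuousOn (fun x => k * u x) (Metric.ball 0 ρ) :=
    (hc.mono fun x hx => by
      simpa using h.smul_mem_U (x := x) (by simpa using hx) (k := 1) (by norm_num) (by norm_num)).const_smul k
  have hc2 : ContinuousOn (fun x => u (k • x)) (Metric.ball 0 ρ) :=
    hc.comp (continuous_const_smul k).continuousOn fun x hx =>
      h.smul_mem_U (by simpa using hx) (by linarith) hk2
  have := (hc1.sub hc2).isOpen_inter_preimage Metric.isOpen_ball (isOpen_Ioi (a := (0 : ℝ)))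
  convert this using 1
  ext x
  simp [setE]

lemma E_sub (h : CoreHyp Ω U u ρ m) {k : ℝ} (hk : 1 < k) (hk2 : k ≤ 2) :
    setE u ρ k ⊆ noseSet Ω u := by
  rintro x ⟨hx, hlt⟩
  have hx' : ‖x‖ < ρ := by simpa using hx
  refine ⟨h.uΩ ?_, k, hk, h.uΩ (h.smul_mem_U hx' (by linarith) hk2), hlt⟩
  simpa using h.smul_mem_U hx' (k := 1) (by norm_num) (by norm_num)

lemma om_open (h : CoreHyp Ω U u ρ m) : IsOpen (noseSet Ω u) := by
  rw [isOpen_iff_mem_nhds]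
  intro x hx
  obtain ⟨hxΩ, s, hs, hsx, hlt⟩ := id hx
  obtain ⟨t, ht1, ht2⟩ := exists_between (lt_min hs (by norm_num : (1 : ℝ) < 2))
  have ht3 : t < s := ht2.trans_le (min_le_left _ _)
  have ht4 : t ≤ 2 := (ht2.trans_le (min_le_right _ _)).le
  refine Filter.mem_of_superset ((h.E_open ht1 ht4).mem_nhds ⟨?_, ?_⟩) (h.E_sub ht1 ht4)
  · simpa using h.om_ball hx
  · exact ray_shrink h.cvx h.zero_mem ht1 ht3 hsx hlt

lemma B_sub (h : CoreHyp Ω U u ρ m) {k : ℝ} (hk : 1 < k) :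
    {x | k • x ∈ noseSet Ω u} ⊆ setE u ρ k := by
  intro x hx
  have hn := h.om_ball hx
  obtain ⟨hxΩ, s, hs, hsx, hlt⟩ := hx
  have hk0 : 0 < k := by linarith
  refine ⟨?_, ?_⟩
  · rw [norm_smul, Real.norm_eq_abs, abs_of_pos hk0] at hn
    have : ‖x‖ ≤ k * ‖x‖ := by nlinarith [norm_nonneg x]
    simpa using this.trans_lt hn
  · rw [smul_smul] at hsx hlt
    have := ray_P h.cvx h.zero_mem one_pos hk (c := s * k) (by nlinarith) hsx (by nlinarith)
    simpa using this

lemma nose_hom (h : CoreHyp Ω U u ρ m) {k : ℝ} (hk : 1 < k) {z : ℝ × ℝ}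
    (hz : k • z ∈ noseSet Ω u) : nose Ω u (k • z) = k * nose Ω u z := by
  have hk0 : 0 < k := by linarith
  have hkz : k • z ∈ Ω := hz.1
  have hzΩ : z ∈ Ω := by
    simpa using smul_mem_of_le h.cvx.1 h.zero_mem zero_le_one hk.le hkz
  apply le_antisymm
  · rw [← div_le_iff₀' hk0]
    refine le_nose hzΩ fun s hs hsz => ?_
    have hs0 : 0 < s := by linarith
    rw [div_le_iff₀ hk0]
    rcases lt_or_ge s k with hsk | hsk
    · obtain ⟨_, t, ht, htx, hlt⟩ := hz
      rw [smul_smul] at htx hlt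
      have := ray_P h.cvx h.zero_mem hs0 hsk (c := t * k) (by nlinarith) htx (by nlinarith)
      refine (nose_le h.hm h.hmu hkz).trans ?_
      rw [div_mul_eq_mul_div, le_div_iff₀ hs0]
      linarith
    · have := nose_le' h.hm h.hmu (x := k • z) (s := s / k) (by rwa [one_le_div hk0])
        (by rwa [smul_smul, div_mul_cancel₀ _ hk0.ne'])
      rw [smul_smul, div_mul_cancel₀ _ hk0.ne'] at this
      refine this.trans_eq ?_
      field_simp
  · refine le_nose hkz fun s hs hsz => ?_
    have hs0 : 0 < s := by linarith
    rw [smul_smul] at hsz ⊢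
    have := nose_le' h.hm h.hmu (x := z) (s := s * k) (by nlinarith) hsz
    rw [le_div_iff₀ (by positivity)] at this ⊢
    linarith

lemma nose_grad_hom (h : CoreHyp Ω U u ρ m) {k : ℝ} (hk : 1 < k) {x : ℝ × ℝ}
    (hx : k • x ∈ noseSet Ω u) : grad2 (nose Ω u) (k • x) = grad2 (nose Ω u) x := by
  have hk0 : k ≠ 0 := by linarith
  have hopen : IsOpen {x | k • x ∈ noseSet Ω u} := h.om_open.preimage (continuous_const_smul k)
  have h1 : (fun z => nose Ω u (k • z)) =ᶠ[nhds x] (k • nose Ω u) := by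
    filter_upwards [hopen.mem_nhds hx] with z hz
    exact h.nose_hom hk hz
  have h2 := h1.fderiv_eq (𝕜 := ℝ)
  rw [fderiv_comp_smul, fderiv_const_smul_field, Pi.smul_apply] at h2
  have h3 := smul_right_injective _ hk0 h2
  simp only [grad2, h3]

lemma nose_grad_u (h : CoreHyp Ω U u ρ m) {k : ℝ} (hk : 1 < k) (hk2 : k ≤ 2) {x : ℝ × ℝ}
    (hx : x ∈ noseSet Ω u) (hkx : k • x ∉ noseSet Ω u) (hd : DifferentiableAt ℝ (nose Ω u) x) :
    ∃ r ∈ Icc 1 k, grad2 (nose Ω u) x = grad2 u (r • x) := by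
  have hk0 : 0 < k := by linarith
  have hn := h.om_ball hx
  have hrU : ∀ r ∈ Icc 1 k, r • x ∈ U := fun r hr =>
    h.smul_mem_U hn (by linarith [hr.1]) (hr.2.trans hk2)
  have hc : ContinuousOn (fun r : ℝ => u (r • x) / r) (Icc 1 k) := by
    refine ContinuousOn.div ?_ continuousOn_id fun r hr => by
      have := hr.1; show r ≠ 0; linarith
    exact h.smooth.continuousOn.comp (by fun_prop) hrU
  obtain ⟨r, hr, hmin⟩ := isCompact_Icc.exists_isMinOn ⟨1, by simp [hk.le]⟩ hc
  have hr0 : 0 < r := by linarith [hr.1]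
  refine ⟨r, hr, ?_⟩
  have hkΩ : k • x ∈ Ω := h.uΩ (hrU k ⟨hk.le, le_rfl⟩)
  have heq : nose Ω u x = u (r • x) / r := by
    refine le_antisymm (nose_le' h.hm h.hmu hr.1 (h.uΩ (hrU r hr))) (le_nose hx.1 fun s hs hsx => ?_)
    rcases le_or_gt s k with hsk | hsk
    · exact hmin ⟨hs, hsk⟩
    · refine le_trans (hmin (⟨hk.le, le_rfl⟩ : k ∈ Icc 1 k)) ?_
      have h1 : ¬ (u ((s / k) • k • x) < (s / k) * u (k • x)) := fun hlt =>
        hkx ⟨hkΩ, s / k, by rwa [one_lt_div hk0], by rwa [smul_smul, div_mul_cancel₀ _ hk0.ne'], hlt⟩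
      rw [smul_smul, div_mul_cancel₀ _ hk0.ne', not_lt] at h1
      show u (k • x) / k ≤ _
      rw [div_le_div_iff₀ hk0 (by linarith)]
      rw [div_mul_eq_mul_div, div_le_iff₀ hk0] at h1
      linarith
  have hdu : DifferentiableAt ℝ u (r • x) := h.diffAt (hrU r hr)
  have hdf : DifferentiableAt ℝ (fun z => u (r • z)) x :=
    DifferentiableAt.comp x hdu (by fun_prop)
  have hle : ∀ᶠ z in nhds x, nose Ω u z ≤ (r⁻¹ • fun z => u (r • z)) z := by
    have : ∀ᶠ z in nhds x, r • z ∈ U :=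
      (continuous_const_smul r).continuousAt.eventually_mem (h.Uo.mem_nhds (hrU r hr))
    filter_upwards [this] with z hz
    have := nose_le' h.hm h.hmu hr.1 (h.uΩ hz)
    rwa [div_eq_inv_mul] at this
  have h2 := touch_fderiv hd (hdf.const_smul r⁻¹) hle (by rw [heq, div_eq_inv_mul]; rfl)
  rw [fderiv_const_smul_field, Pi.smul_apply, fderiv_comp_smul, smul_smul, inv_mul_cancel₀ hr0.ne', one_smul] at h2
  simp only [grad2, h2]

lemma nose_diff (h : CoreHyp Ω U u ρ m) (f : ℝ × ℝ → ℝ) (hf : Continuous f) {K : ℝ}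
    (hK : ∀ ξ, |f ξ| ≤ K) :
    NF f Ω (nose Ω u) - NF f Ω u = ∫ x in noseSet Ω u, (f (grad2 (nose Ω u) x) - f (grad2 u x)) := by
  have hfin := h.comp.measure_lt_top (μ := volume)
  unfold NF
  rw [← integral_sub (fgrad_int hf hK _ hfin) (fgrad_int hf hK _ hfin)]
  refine setIntegral_eq_of_subset_of_ae_sdiff_eq_zero h.comp.isClosed.measurableSet.nullMeasurableSet
    (fun x hx => hx.1) ?_
  have hcn := nose_convex h.cvx h.hm h.hmu
  filter_upwards [ae_interior h.cvx.1, cvx_ae_diff h.cvx, cvx_ae_diff hcn] with x h1 h2 h3 hx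
  have hi := h1 hx.1
  rw [touch_grad (h3 hi) (h2 hi) ?_ (nose_eq_of_not_mem h.hm h.hmu hx.1 hx.2), sub_self]
  filter_upwards [isOpen_interior.mem_nhds hi] with y hy
  exact nose_le h.hm h.hmu (interior_subset hy)

lemma conv_k (h : CoreHyp Ω U u ρ m) {k : ℝ} (hk : 1 < k) :
    ConvexOn ℝ Ω (fun x => max (u x) (k * u (k⁻¹ • x))) := by
  have hk0 : 0 < k := by linarith
  have hmem : ∀ x ∈ Ω, k⁻¹ • x ∈ Ω := fun x hx => by
    refine smul_mem_of_le h.cvx.1 h.zero_mem (by positivity) (inv_le_one_of_one_le₀ hk.le) ?_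
    simpa using hx
  refine h.cvx.sup ⟨h.cvx.1, ?_⟩
  intro x hx y hy a b ha hb hab
  have := h.cvx.2 (hmem x hx) (hmem y hy) ha hb hab
  have e : k⁻¹ • (a • x + b • y) = a • k⁻¹ • x + b • k⁻¹ • y := by
    rw [smul_add, smul_comm k⁻¹ a, smul_comm k⁻¹ b]
  simp only [smul_eq_mul] at this ⊢
  rw [e]
  calc _ ≤ k * (a * u (k⁻¹ • x) + b * u (k⁻¹ • y)) := by gcongr
    _ = _ := by ring

lemma k_mem (h : CoreHyp Ω U u ρ m) {k : ℝ} (hk : 1 < k) {x : ℝ × ℝ} (hx : x ∈ Ω)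
    (hlt : u x < k * u (k⁻¹ • x)) : k⁻¹ • x ∈ setE u ρ k := by
  have hk0 : 0 < k := by linarith
  have hmem : k⁻¹ • x ∈ Ω := by
    refine smul_mem_of_le h.cvx.1 h.zero_mem (by positivity) (inv_le_one_of_one_le₀ hk.le) ?_
    simpa using hx
  have e : k • k⁻¹ • x = x := smul_inv_smul₀ hk0.ne' x
  have hm : k⁻¹ • x ∈ noseSet Ω u := ⟨hmem, k, hk, by rwa [e], by rwa [e]⟩
  exact ⟨by simpa using h.om_ball hm, by rwa [e]⟩

lemma k_diff (h : CoreHyp Ω U u ρ m) (f : ℝ × ℝ → ℝ) (hf : Continuous f) {K : ℝ}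
    (hK : ∀ ξ, |f ξ| ≤ K) {k : ℝ} (hk : 1 < k) (hk2 : k ≤ 2) :
    NF f Ω (fun x => max (u x) (k * u (k⁻¹ • x))) - NF f Ω u =
      k ^ 2 * ∫ x in setE u ρ k, (f (grad2 u x) - f (grad2 u (k • x))) := by
  have hk0 : 0 < k := by linarith
  have hfin := h.comp.measure_lt_top (μ := volume)
  set D : Set (ℝ × ℝ) := {x | k⁻¹ • x ∈ setE u ρ k} with hD
  have hDo : IsOpen D := (h.E_open hk hk2).preimage (continuous_const_smul k⁻¹)
  have hED : setE u ρ k = {x | k • x ∈ D} := by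
    ext x; simp [hD, smul_smul, hk0.ne']
  have e : ∀ x : ℝ × ℝ, k • k⁻¹ • x = x := fun x => smul_inv_smul₀ hk0.ne' x
  have e2 : ∀ x : ℝ × ℝ, k⁻¹ • k • x = x := fun x => inv_smul_smul₀ hk0.ne' x
  have hDU : D ⊆ U := by
    intro x hx
    have := h.smul_mem_U (x := k⁻¹ • x) (by simpa using hx.1) hk0.le hk2
    rwa [e] at this
  have hs := scale_int (fun x => f (grad2 u (k⁻¹ • x)) - f (grad2 u x)) D hk0
  rw [← hED] at hs
  simp only [e2] at hs
  rw [hs]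
  unfold NF
  rw [← integral_sub (fgrad_int hf hK _ hfin) (fgrad_int hf hK _ hfin)]
  rw [setIntegral_eq_of_subset_of_ae_sdiff_eq_zero (s := D)
    h.comp.isClosed.measurableSet.nullMeasurableSet (hDU.trans h.uΩ)]
  · refine setIntegral_congr_fun hDo.measurableSet fun x hx => ?_
    have h1 : (fun x => max (u x) (k * u (k⁻¹ • x))) =ᶠ[nhds x] (k • fun x => u (k⁻¹ • x)) := by
      filter_upwards [hDo.mem_nhds hx] with z hz
      have := hz.2
      rw [e] at this
      exact max_eq_right this.le
    have h2 := h1.fderiv_eq (𝕜 := ℝ)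
    rw [fderiv_const_smul_field, Pi.smul_apply, fderiv_comp_smul, smul_smul, mul_inv_cancel₀ hk0.ne', one_smul] at h2
    simp only [grad2, h2]
  · filter_upwards [ae_interior h.cvx.1, cvx_ae_diff h.cvx, cvx_ae_diff (h.conv_k hk)] with x h1 h2 h3 hx
    have hi := h1 hx.1
    rw [touch_grad (h2 hi) (h3 hi) (Filter.Eventually.of_forall fun y => le_max_left _ _), sub_self]
    refine (max_eq_left ?_).symm
    by_contra hc
    exact hx.2 (h.k_mem hk hx.1 (not_le.1 hc))

end CoreHyp

namespace CoreHyp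
variable {Ω U : Set (ℝ × ℝ)} {u : ℝ × ℝ → ℝ} {ρ m : ℝ}

lemma grad_cont (h : CoreHyp Ω U u ρ m) {f : ℝ × ℝ → ℝ} (hf : Continuous f) :
    ContinuousOn (fun x => f (grad2 u x)) U := by
  have h1 : ContinuousOn (fderiv ℝ u) U :=
    h.smooth.continuousOn_fderiv_of_isOpen h.Uo (by norm_num)
  refine hf.comp_continuousOn ?_
  exact (h1.clm_apply continuousOn_const).prodMk (h1.clm_apply continuousOn_const)

lemma core (h : CoreHyp Ω U u ρ m) (f : ℝ × ℝ → ℝ) (hf : Continuous f) {K : ℝ}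
    (hK : ∀ ξ, |f ξ| ≤ K) {k₀ : ℝ} (hk₀ : 1 < k₀)
    (hmin : ∀ k, 1 < k → k < k₀ → NF f Ω u ≤ NF f Ω (fun x => max (u x) (k * u (k⁻¹ • x)))) :
    NF f Ω (nose Ω u) ≤ NF f Ω u := by
  set ω := noseSet Ω u with hω
  have hωm : MeasurableSet ω := h.om_open.measurableSet
  have hωfin : volume ω < ⊤ :=
    (measure_mono (fun x hx => hx.1)).trans_lt (h.comp.measure_lt_top (μ := volume))
  set v := fun x => f (grad2 u x) with hv
  set w := fun x => f (grad2 (nose Ω u) x) with hw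
  have hvm : Measurable v := fgrad_meas hf u
  have hvU := h.grad_cont hf
  have key : ∀ η > 0, NF f Ω (nose Ω u) - NF f Ω u ≤ η * volume.real ω := by
    intro η hη
    have huc : UniformContinuousOn v (Metric.closedBall 0 (2 * ρ)) :=
      (isCompact_closedBall _ _).uniformContinuousOn_of_continuous (hvU.mono h.ball)
    obtain ⟨θ, hθ, hθu⟩ := Metric.uniformContinuousOn_iff.1 huc η hη
    have hρ := h.hρ
    obtain ⟨k, hk, hkl⟩ := exists_between (lt_min hk₀ (lt_min (by norm_num : (1 : ℝ) < 2)
      (by have : 0 < θ / ρ := by positivity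
          linarith : (1 : ℝ) < 1 + θ / ρ)))
    obtain ⟨hkk, hk2', hkθ⟩ : k < k₀ ∧ k < 2 ∧ k < 1 + θ / ρ := by
      simpa using hkl
    have hk2 := hk2'.le
    have hk0 : 0 < k := by linarith
    have hkθ' : (k - 1) * ρ < θ := by
      rw [← lt_div_iff₀ hρ]; linarith
    have hΔ : 0 ≤ NF f Ω (fun x => max (u x) (k * u (k⁻¹ • x))) - NF f Ω u :=
      sub_nonneg.2 (hmin k hk hkk)
    rw [h.k_diff f hf hK hk hk2] at hΔ
    have hA := h.nose_diff f hf hK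
    have hA2 : ∫ x in ω, (w x - v x) = k ^ 2 * ∫ x in {x | k • x ∈ ω}, (w x - v (k • x)) := by
      rw [← scale_int _ ω hk0]
      congr 1
      refine setIntegral_congr_fun
        (h.om_open.preimage (continuous_const_smul k)).measurableSet fun x hx => ?_
      simp only [hw, h.nose_grad_hom hk hx]
    rw [hA]
    set B : Set (ℝ × ℝ) := {x | k • x ∈ ω} with hB
    set E := setE u ρ k with hE
    have hBm : MeasurableSet B := (h.om_open.preimage (continuous_const_smul k)).measurableSet
    have hEm : MeasurableSet E := (h.E_open hk hk2).measurableSet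
    have hBE : B ⊆ E := h.B_sub hk
    have hEω : E ⊆ ω := h.E_sub hk hk2
    have iv : IntegrableOn v ω := fgrad_int hf hK u hωfin
    have iw : IntegrableOn w ω := fgrad_int hf hK _ hωfin
    have ivk : IntegrableOn (fun x => v (k • x)) ω := by
      refine IntegrableOn.of_bound hωfin (hvm.comp (measurable_const_smul k)).aestronglyMeasurable K ?_
      exact Filter.Eventually.of_forall fun x => by simpa using hK _
    have ic : IntegrableOn (fun _ : ℝ × ℝ => η) ω := integrableOn_const hωfin.ne
    have eB : ∀ g : ℝ × ℝ → ℝ, ∫ x in B, g x = ∫ x in ω, B.indicator g x := fun g => by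
      rw [setIntegral_indicator hBm, inter_eq_right.2 (hBE.trans hEω)]
    have eE : ∀ g : ℝ × ℝ → ℝ, ∫ x in E, g x = ∫ x in ω, E.indicator g x := fun g => by
      rw [setIntegral_indicator hEm, inter_eq_right.2 hEω]
    have hcη : k ^ 2 * ∫ x in B, η = ∫ x in ω, η := scale_int (fun _ => η) ω hk0
    have i1 : IntegrableOn (fun x => w x - v x) ω := iw.sub iv
    have i2 : IntegrableOn (B.indicator (fun x => w x - v (k • x))) ω := (iw.sub ivk).indicator hBm
    have i3 : IntegrableOn (E.indicator (fun x => v x - v (k • x))) ω := (iv.sub ivk).indicator hEm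
    have i12 : IntegrableOn (fun x => (w x - v x) - B.indicator (fun x => w x - v (k • x)) x) ω :=
      i1.sub i2
    have hint : ∫ x in ω, ((w x - v x) - B.indicator (fun x => w x - v (k • x)) x
        + E.indicator (fun x => v x - v (k • x)) x) ≤ ∫ x in ω, (η - B.indicator (fun _ => η) x) := by
      refine setIntegral_mono_ae_restrict
        (i12.add i3)
        (ic.sub (ic.indicator hBm)) ?_
      rw [Filter.EventuallyLE, ae_restrict_iff' hωm]
      have hcn := nose_convex h.cvx h.hm h.hmu
      filter_upwards [cvx_ae_diff hcn] with x hd hx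
      have hxb := h.om_ball hx
      have hd' := hd (h.UΩ (h.om_U hx))
      by_cases hxB : x ∈ B
      · simp [hxB, hBE hxB]
      · obtain ⟨r, hr, hg⟩ := h.nose_grad_u hk hk2 hx hxB hd'
        have hwx : w x = v (r • x) := by simp only [hw, hv, hg]
        have hmem : ∀ t ∈ Icc 1 k, t • x ∈ Metric.closedBall (0 : ℝ × ℝ) (2 * ρ) := fun t ht => by
          rw [mem_closedBall_zero_iff, norm_smul, Real.norm_eq_abs, abs_of_nonneg (by linarith [ht.1])]
          have := ht.2
          gcongr; linarith
        have hclose : ∀ t ∈ Icc 1 k, v (r • x) - v (t • x) ≤ η := fun t ht => by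
          have h1 := hθu (r • x) (hmem r hr) (t • x) (hmem t ht) (by
            rw [dist_eq_norm, ← sub_smul, norm_smul, Real.norm_eq_abs]
            refine lt_of_le_of_lt ?_ hkθ'
            have : |r - t| ≤ k - 1 := by
              rw [abs_le]; constructor <;> linarith [hr.1, hr.2, ht.1, ht.2]
            gcongr)
          rw [Real.dist_eq] at h1
          exact (le_abs_self _).trans h1.le
        have c1 := hclose 1 ⟨le_rfl, hk.le⟩
        have c2 := hclose k ⟨hk.le, le_rfl⟩
        rw [one_smul] at c1
        by_cases hxE : x ∈ E
        · simp [hxB, hxE, hwx]; linarith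
        · simp [hxB, hxE, hwx]; linarith
    rw [integral_add i12 i3, integral_sub i1 i2, integral_sub ic (ic.indicator hBm),
      ← eB, ← eE, ← eB] at hint
    have hcv : ∫ x in ω, η = η * volume.real ω := by
      simp [mul_comm]
    have h3 := mul_le_mul_of_nonneg_left hint (by positivity : 0 ≤ k ^ 2)
    have h4 : 0 < k ^ 2 - 1 := by nlinarith
    rw [← hcv]
    change 0 ≤ k ^ 2 * ∫ x in E, (v x - v (k • x)) at hΔ
    change ∫ x in ω, (w x - v x) ≤ _
    refine le_of_mul_le_mul_left ?_ h4
    nlinarith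
  have hA : NF f Ω (nose Ω u) - NF f Ω u ≤ 0 := by
    refine le_of_forall_pos_le_add fun ε hε => ?_
    have hV : 0 ≤ volume.real ω := measureReal_nonneg
    have := key (ε / (volume.real ω + 1)) (by positivity)
    refine this.trans ?_
    rw [zero_add, div_mul_eq_mul_div, div_le_iff₀ (by positivity)]
    nlinarith
  linarith

end CoreHyp

lemma cm_int {Ω : Set (ℝ × ℝ)} (hΩc : IsCompact Ω) {M : ℝ} {u : ℝ × ℝ → ℝ} (hu : MemCM Ω M u) :
    IntegrableOn u Ω := by
  have hfin : volume Ω < ⊤ := hΩc.measure_lt_top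
  have hc : ContinuousOn u (interior Ω) := hu.1.locallyLipschitzOn_interior.continuousOn
  have hae : Ω =ᵐ[volume] interior Ω := by
    filter_upwards [ae_interior hu.1.1] with x hx
    exact propext ⟨hx, fun h => interior_subset h⟩
  refine IntegrableOn.of_bound hfin ?_ M ?_
  · rw [Measure.restrict_congr_set hae]
    exact hc.aestronglyMeasurable isOpen_interior.measurableSet
  · rw [ae_restrict_iff' hΩc.isClosed.measurableSet]
    refine Filter.Eventually.of_forall fun x hx => ?_
    rw [Real.norm_eq_abs, abs_of_nonneg (hu.2 x hx).1]
    exact (hu.2 x hx).2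

lemma NF_translate (f : ℝ × ℝ → ℝ) (Ω : Set (ℝ × ℝ)) (w : ℝ × ℝ → ℝ) (x₁ : ℝ × ℝ) (c : ℝ) :
    NF f Ω (fun x => w (x - x₁) + c) = NF f ((fun y => x₁ + y) ⁻¹' Ω) w := by
  unfold NF
  have h1 : ∀ x, grad2 (fun x => w (x - x₁) + c) x = grad2 w (x - x₁) := fun x => by
    simp only [grad2]
    rw [fderiv_add_const, fderiv_comp_sub]
  simp only [h1]
  have := (measurePreserving_add_left (volume : Measure (ℝ × ℝ)) x₁).setIntegral_preimage_emb
    (measurableEmbedding_addLeft x₁) (fun x => f (grad2 w (x - x₁))) Ω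
  simpa using this.symm

lemma main_contra {Ω : Set (ℝ × ℝ)} (hΩc : IsCompact Ω)
    {M : ℝ} {f : ℝ × ℝ → ℝ} (hf : Continuous f) {K : ℝ} (hK : ∀ ξ, |f ξ| ≤ K)
    {u : ℝ × ℝ → ℝ} (hu : Minimizes f Ω M u)
    (hlex : ∀ v, Minimizes f Ω M v → ∫ x in Ω, u x ≤ ∫ x in Ω, v x)
    {U : Set (ℝ × ℝ)} (hUo : IsOpen U) (hU : U ⊆ interior Ω) (hs : ContDiffOn ℝ 1 u U)
    (hpos : ∀ x ∈ U, 0 < u x) {x₀ : ℝ × ℝ} (hx₀ : x₀ ∈ U)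
    (hex : (x₀, u x₀) ∈ Set.extremePoints ℝ (epi Ω u)) : False := by
  have hUΩ : U ⊆ Ω := hU.trans interior_subset
  obtain ⟨ρ₀, hρ₀, hb₀⟩ := Metric.nhds_basis_closedBall.mem_iff.1 (hUo.mem_nhds hx₀)
  obtain ⟨x₁, hx₁, δ, hδ, hstrong⟩ := strong_pt hu.1.1 hUo hU (hs.differentiableOn (by norm_num))
    hρ₀ hb₀ hex
  obtain ⟨R, hR, hRb⟩ := Metric.nhds_basis_closedBall.mem_iff.1 (Metric.isOpen_ball.mem_nhds hx₁)
  have hRU : Metric.closedBall x₁ R ⊆ U := hRb.trans (Metric.ball_subset_closedBall.trans hb₀)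
  have hx₁U : x₁ ∈ U := hRU (Metric.mem_closedBall_self hR.le)
  have hux₁ := hpos x₁ hx₁U
  have hst : ∀ y, ‖y‖ ≤ R → u x₁ + fderiv ℝ u x₁ y + δ * ‖y‖ ^ 2 ≤ u (x₁ + y) := fun y hy => by
    have := hstrong (x₁ + y) (Metric.ball_subset_closedBall (hRb (by simpa using hy)))
    simpa using this
  have huM : u x₁ < M := by
    have hn : ‖((R, 0) : ℝ × ℝ)‖ = R := by simp [Prod.norm_def, hR.le]
    have hn2 : ‖-((R, 0) : ℝ × ℝ)‖ = R := by rw [norm_neg, hn]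
    have h1 := hst (R, 0) hn.le
    have h2 := hst (-(R, 0)) hn2.le
    rw [hn] at h1
    rw [hn2, map_neg] at h2
    have h3 := (hu.1.2 (x₁ + (R, 0)) (hUΩ (hRU (by rw [Metric.mem_closedBall, dist_self_add_left, hn])))).2
    have h4 := (hu.1.2 (x₁ + -(R, 0)) (hUΩ (hRU (by rw [Metric.mem_closedBall, dist_self_add_left, hn2])))).2
    have : 0 < δ * R ^ 2 := by positivity
    linarith
  set M' := (u x₁ + M) / 2 with hM'
  have hM'1 : u x₁ < M' := by linarith
  have hM'2 : M' < M := by linarith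
  have hM'0 : 0 < M' := by linarith
  have hcont : ContinuousAt u x₁ := hs.continuousOn.continuousAt (hUo.mem_nhds hx₁U)
  obtain ⟨ρ₁, hρ₁, hb₁⟩ := Metric.eventually_nhds_iff.1 (hcont.eventually_lt_const hM'1)
  set ρ := min ρ₁ (R / 2) with hρd
  have hρ : 0 < ρ := by positivity
  have hρR : 2 * ρ ≤ R := by have := min_le_right ρ₁ (R / 2); linarith
  set T : Set (ℝ × ℝ) := (fun y => x₁ + y) ⁻¹' Ω with hT
  set U' : Set (ℝ × ℝ) := (fun y => x₁ + y) ⁻¹' U with hU'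
  set W : ℝ × ℝ → ℝ := fun y => u (x₁ + y) with hW
  have hWc : ConvexOn ℝ T W := hu.1.1.translate_right x₁
  have hU'o : IsOpen U' := hUo.preimage (by fun_prop)
  have hballU' : Metric.closedBall (0 : ℝ × ℝ) R ⊆ U' := fun y hy =>
    hRU (by simpa using hy)
  have hU'T : U' ⊆ T := fun y hy => hUΩ hy
  have hWs : ContDiffOn ℝ 1 W U' := hs.comp (contDiff_const.add contDiff_id).contDiffOn fun y hy => hy
  have hW0 : W 0 = u x₁ := by simp [hW]
  have hWfd : fderiv ℝ W 0 = fderiv ℝ u x₁ := by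
    rw [hW, fderiv_comp_add_left]; simp
  have h0U' : (0 : ℝ × ℝ) ∈ U' := hballU' (by simpa using hR.le)
  obtain ⟨ε₀, hε₀, hloc⟩ := nose_loc hWc
    ((hWs.differentiableOn (by norm_num)).differentiableAt (hU'o.mem_nhds h0U')) hδ hρ
    (((Metric.closedBall_subset_closedBall (by linarith)).trans hballU').trans hU'T)
    (fun y hy => by
      rw [hW0, hWfd]
      refine hst y ?_
      have : ‖y‖ ≤ ρ := by simpa using hy
      linarith)
  obtain ⟨ε, hε, hεl⟩ := exists_between (lt_min hε₀ hux₁)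
  obtain ⟨hεε, hεu⟩ := lt_min_iff.1 hεl
  set z := u x₁ - ε with hz
  have hz0 : 0 < z := by linarith
  set ut : ℝ × ℝ → ℝ := fun y => W y - z with hut
  have hTc : IsCompact T := (Homeomorph.addLeft x₁).isClosedEmbedding.isCompact_preimage hΩc
  have H : CoreHyp T U' ut ρ (-z) :=
    { comp := hTc
      cvx := by
        have := hWc.add_const (-z)
        have e : ut = W + fun _ => -z := by funext y; simp [hut, sub_eq_add_neg]
        rw [e]; exact this
      Uo := hU'o
      UΩ := interior_maximal hU'T hU'o
      smooth := hWs.sub contDiffOn_const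
      hρ := hρ
      ball := (Metric.closedBall_subset_closedBall hρR).trans hballU'
      far := fun y hy s hs1 hsy hyρ => by
        have := hloc ε hε hεε y hy s hs1 hsy hyρ
        rw [hW0] at this
        simp only [hut, hz]
        convert this using 1
        · ring
        · ring
      hm := by linarith
      hmu := fun x hx => by
        have := (hu.1.2 _ hx).1
        simp only [hut, hW]; linarith }
  have back : ∀ W', ConvexOn ℝ T W' → (∀ y ∈ T, -z ≤ W' y ∧ W' y ≤ M - z) →
      MemCM Ω M (fun x => W' (x - x₁) + z) := by
    intro W' hc hb
    have hmem : ∀ x ∈ Ω, x - x₁ ∈ T := fun x hx => by simpa [hT] using hx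
    refine ⟨?_, fun x hx => ?_⟩
    · refine ConvexOn.add_const ?_ z
      have := hc.translate_right (-x₁)
      have e1 : (fun z => -x₁ + z) ⁻¹' T = Ω := by ext x; simp [hT]
      have e2 : (W' ∘ fun z => -x₁ + z) = fun x => W' (x - x₁) := by
        funext x; simp [neg_add_eq_sub]
      rwa [e1, e2] at this
    · have := hb _ (hmem x hx)
      constructor <;> linarith
  have hNFu : NF f Ω u = NF f T ut := by
    rw [← NF_translate f Ω ut x₁ z]
    congr 1
    ext x; simp [hut, hW]
  have hutM : ∀ y ∈ T, ut y ≤ M - z := fun y hy => by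
    have := (hu.1.2 _ hy).2
    simp only [hut, hW]; linarith
  have hcomp : NF f T (nose T ut) ≤ NF f T ut := by
    refine H.core f hf hK (k₀ := M / M') (by rwa [one_lt_div hM'0]) fun k hk hkk => ?_
    rw [← hNFu, ← NF_translate f Ω _ x₁ z]
    refine hu.2 _ (back _ (H.conv_k hk) fun y hy => ⟨(H.hmu y hy).trans (le_max_left _ _), ?_⟩)
    refine max_le (hutM y hy) ?_
    rcases le_or_gt (k * ut (k⁻¹ • y)) (ut y) with hle | hgt
    · exact hle.trans (hutM y hy)
    · have hE := (H.k_mem hk hy hgt).1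
      have h1 : u (x₁ + k⁻¹ • y) < M' := hb₁ (by
        rw [dist_self_add_left]
        have : ‖k⁻¹ • y‖ < ρ := by simpa using hE
        exact this.trans_le (min_le_left _ _))
      rw [lt_div_iff₀ hM'0] at hkk
      simp only [hut, hW]
      nlinarith
  set v : ℝ × ℝ → ℝ := fun x => nose T ut (x - x₁) + z with hv
  have h0T : (0 : ℝ × ℝ) ∈ T := H.zero_mem
  have hvCM : MemCM Ω M v := back _ (nose_convex H.cvx H.hm H.hmu) fun y hy =>
    ⟨le_nose hy fun s hs1 hsy => nose_lb H.hm H.hmu hs1 hsy,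
      (nose_le H.hm H.hmu hy).trans (hutM y hy)⟩
  have hvmin : Minimizes f Ω M v := by
    refine ⟨hvCM, fun w hw => ?_⟩
    refine le_trans ?_ (hu.2 w hw)
    rw [hNFu, hv, NF_translate]
    exact hcomp
  have hle : ∀ x ∈ Ω, v x ≤ u x := fun x hx => by
    have := nose_le H.hm H.hmu (x := x - x₁) (by simpa [hT] using hx)
    simp only [hut, hW, add_sub_cancel] at this
    simp only [hv]; linarith
  have hint := hlex v hvmin
  have iu := cm_int hΩc hu.1
  have iv := cm_int hΩc hvCM
  have hz1 : ∫ x in Ω, (u x - v x) = 0 := by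
    apply le_antisymm
    · rw [integral_sub iu iv]; linarith
    · exact setIntegral_nonneg hΩc.isClosed.measurableSet fun x hx => sub_nonneg.2 (hle x hx)
  have iuv : IntegrableOn (fun x => u x - v x) Ω volume := iu.sub iv
  rw [setIntegral_eq_zero_iff_of_nonneg_ae ?_ iuv] at hz1
  · rw [Filter.EventuallyEq, ae_restrict_iff' hΩc.isClosed.measurableSet] at hz1
    set O : Set (ℝ × ℝ) := (fun x => x - x₁) ⁻¹' noseSet T ut with hO
    have hOo : IsOpen O := H.om_open.preimage (by fun_prop)
    have hOne : O.Nonempty := by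
      refine ⟨x₁, ?_⟩
      simp only [hO, mem_preimage, sub_self]
      refine ⟨h0T, 2, by norm_num, by simpa using h0T, ?_⟩
      simp only [smul_zero, hut, hW0, hz]; linarith
    have hnull : volume O = 0 := by
      refine measure_eq_zero_iff_ae_notMem.2 ?_
      filter_upwards [hz1] with x hx hxO
      have hxΩ : x ∈ Ω := by
        have := hxO.1
        simpa [hT] using this
      have h1 := hx hxΩ
      have h2 := nose_lt_of_mem H.hm H.hmu hxO
      simp only [hut, hW, add_sub_cancel] at h2
      simp only [Pi.zero_apply, hv] at h1
      linarith
    exact (hOo.measure_pos volume hOne).ne' hnull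
  · rw [Filter.EventuallyLE, ae_restrict_iff' hΩc.isClosed.measurableSet]
    exact Filter.Eventually.of_forall fun x hx => sub_nonneg.2 (hle x hx)

/-- For bounded continuous `f` there is a minimizer `u` of `F` in `𝒞_M`
such that on any open set `U ⊆ int Ω` where `u` is `C¹` and positive, the graph of `u`
contains no extreme points of `epi(u)`. -/
theorem statement1
    (Ω : Set (ℝ × ℝ)) (hΩc : IsCompact Ω) (hΩconv : Convex ℝ Ω)
    (hΩint : (interior Ω).Nonempty) (M : ℝ) (hM : 0 < M)
    (f : ℝ × ℝ → ℝ) (hf : Continuous f) (hbd : ∃ K : ℝ, ∀ ξ : ℝ × ℝ, |f ξ| ≤ K) :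
    ∃ u : ℝ × ℝ → ℝ, Minimizes f Ω M u ∧
      ∀ U : Set (ℝ × ℝ), IsOpen U → U ⊆ interior Ω →
        ContDiffOn ℝ 1 u U → (∀ x ∈ U, 0 < u x) →
        ∀ x ∈ U, (x, u x) ∉ Set.extremePoints ℝ (epi Ω u) := by
  obtain ⟨K, hK⟩ := hbd
  obtain ⟨u, hu, hlex⟩ := exists_lex hΩc hΩconv hM hf hK
  exact ⟨u, hu, fun U hUo hU hs hpos x hx hex =>
    main_contra hΩc hf hK hu hlex hUo hU hs hpos hx hex⟩
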